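/- arXiv:2005.08175 — 2 statements merged into one kernel-verified Lean document; each statement's English description precedes it below -/
import Mathlib

section
/- Let ψ: h̄⊗A → ℂ be a linear map and V(ψ) the associated irreducible highest weight 𝔏(A)-module. Then V(ψ) has finite-dimensional weight spaces with respect to h̄ if and only if there exists a cofinite ideal I of A with ψ(h̄⊗I) = 0. Moreover, in this case (𝔏⊗I)·V(ψ) = 0. -/
noncomputable section

/-!
Common setup: a realization of the loop affine-Virasoro algebra
`𝔏(A) = ((g̊ ⊗ ℂ[t,t⁻¹] ⊕ ℂK) ⋊ Vir) ⊗ A`.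

* `g` plays the role of the finite dimensional simple Lie algebra `g̊`.
* `A` is a commutative associative unital `ℂ`-algebra.
* `L` plays the role of `𝔏(A)`; the structure fields record the generators
  `E n x a = (x ⊗ tⁿ) ⊗ a`, `D n a = dₙ ⊗ a`, `K a = K ⊗ a`, `C a = C ⊗ a`
  together with the defining bracket relations, and the fact that the
  generators span `L`.
-/

/-- An ideal of a `ℂ`-algebra is cofinite if the quotient is finite dimensional. -/
def IsCofiniteIdeal {A : Type*} [CommRing A] [Algebra ℂ A] (I : Ideal A) : Prop :=
  FiniteDimensional ℂ (A ⧸ I)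

/-- A realization of the loop affine-Virasoro algebra `𝔏(A)`. -/
structure LoopAffVir (g : Type*) [LieRing g] [LieAlgebra ℂ g]
    (A : Type*) [CommRing A] [Algebra ℂ A]
    (L : Type*) [LieRing L] [LieAlgebra ℂ L] : Type _ where
  /-- the Cartan subalgebra `h̊` of `g̊` -/
  H : LieSubalgebra ℂ g
  isCartan : H.IsCartanSubalgebra
  /-- the invariant nondegenerate symmetric bilinear form on `g̊` -/
  form : g →ₗ[ℂ] g →ₗ[ℂ] ℂ
  form_symm : ∀ x y : g, form x y = form y x
  form_nondeg : ∀ x : g, (∀ y : g, form x y = 0) → x = 0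
  form_invariant : ∀ x y z : g, form ⁅x, y⁆ z = form x ⁅y, z⁆
  /-- the root space `g̊_α` -/
  rootSp : Module.Dual ℂ H → Submodule ℂ g
  rootSp_def : ∀ (α : Module.Dual ℂ H) (x : g),
      x ∈ rootSp α ↔ ∀ h : H, ⁅(h : g), x⁆ = α h • x
  /-- a choice of positive roots `Δ̊₊` -/
  Δplus : Set (Module.Dual ℂ H)
  Δplus_root : ∀ α ∈ Δplus, α ≠ 0 ∧ rootSp α ≠ ⊥
  Δplus_cover : ∀ α : Module.Dual ℂ H, α ≠ 0 → rootSp α ≠ ⊥ → α ∈ Δplus ∨ -α ∈ Δplus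
  Δplus_disj : ∀ α ∈ Δplus, -α ∉ Δplus
  /-- `E n x a = (x ⊗ tⁿ) ⊗ a` -/
  E : ℤ → g →ₗ[ℂ] A →ₗ[ℂ] L
  /-- `D n a = dₙ ⊗ a` -/
  D : ℤ → A →ₗ[ℂ] L
  /-- `K a = K ⊗ a` (affine center) -/
  K : A →ₗ[ℂ] L
  /-- `C a = C ⊗ a` (Virasoro center) -/
  C : A →ₗ[ℂ] L
  lie_EE : ∀ (n m : ℤ) (x y : g) (a b : A),
      ⁅E n x a, E m y b⁆ = E (n + m) ⁅x, y⁆ (a * b)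
        + (if m = -n then (n : ℂ) * form x y else 0) • K (a * b)
  lie_DE : ∀ (n m : ℤ) (x : g) (a b : A),
      ⁅D n a, E m x b⁆ = (m : ℂ) • E (m + n) x (a * b)
  lie_DD : ∀ (n m : ℤ) (a b : A),
      ⁅D n a, D m b⁆ = ((m : ℂ) - (n : ℂ)) • D (n + m) (a * b)
        + (if m = -n then (((n : ℂ) ^ 3 - (n : ℂ)) / 12) else 0) • C (a * b)
  K_central : ∀ (a : A) (z : L), ⁅K a, z⁆ = 0
  C_central : ∀ (a : A) (z : L), ⁅C a, z⁆ = 0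
  span_top : Submodule.span ℂ
      ({z : L | ∃ (n : ℤ) (x : g) (a : A), z = E n x a}
        ∪ {z : L | ∃ (n : ℤ) (a : A), z = D n a}
        ∪ {z : L | ∃ a : A, z = K a}
        ∪ {z : L | ∃ a : A, z = C a}) = ⊤

namespace LoopAffVir

variable {g A L : Type*} [LieRing g] [LieAlgebra ℂ g] [CommRing A] [Algebra ℂ A]
  [LieRing L] [LieAlgebra ℂ L] (S : LoopAffVir g A L)

/-- Generators of the Cartan subalgebra `h̄ = h̊ ⊕ ℂK ⊕ ℂd₀ ⊕ ℂC ⊆ 𝔏 ⊗ 1`. -/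
def cartanSet : Set L :=
  {z : L | ∃ h ∈ S.H, z = S.E 0 h 1} ∪ {S.K 1, S.D 0 1, S.C 1}

/-- The Cartan subalgebra `h̄` of `𝔏(A)`. -/
def cartan : Submodule ℂ L := Submodule.span ℂ S.cartanSet

/-- `h ∈ h̊` as an element of `h̄`. -/
def eH (h : S.H) : S.cartan :=
  ⟨S.E 0 h 1, Submodule.subset_span (Set.mem_union_left _ ⟨(h : g), h.2, rfl⟩)⟩

/-- `K ⊗ 1` as an element of `h̄`. -/
def K1 : S.cartan :=
  ⟨S.K 1, Submodule.subset_span (Set.mem_union_right _ (by simp))⟩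

/-- `d₀ ⊗ 1` as an element of `h̄`. -/
def d0 : S.cartan :=
  ⟨S.D 0 1, Submodule.subset_span (Set.mem_union_right _ (by simp))⟩

/-- `C ⊗ 1` as an element of `h̄`. -/
def C1 : S.cartan :=
  ⟨S.C 1, Submodule.subset_span (Set.mem_union_right _ (by simp))⟩

variable (V : Type*) [AddCommGroup V] [Module ℂ V] [LieRingModule L V] [LieModule ℂ L V]

/-- The weight space of an `𝔏(A)`-module attached to `χ ∈ h̄*`. -/
def wtSpace (χ : Module.Dual ℂ S.cartan) : Submodule ℂ V where
  carrier := {v : V | ∀ h : S.cartan, ⁅(h : L), v⁆ = χ h • v}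
  add_mem' := by
    intro a b ha hb h
    rw [lie_add, ha h, hb h, smul_add]
  zero_mem' := by
    intro h
    rw [lie_zero, smul_zero]
  smul_mem' := by
    intro c v hv h
    rw [lie_smul, hv h, smul_comm]

/-- The set of weights `P(V)`. -/
def weights : Set (Module.Dual ℂ S.cartan) := {χ | S.wtSpace V χ ≠ ⊥}

/-- `V` is a weight module: it is the (direct) sum of its weight spaces. -/
def IsWeightModule : Prop := (⨆ χ : Module.Dual ℂ S.cartan, S.wtSpace V χ) = ⊤

/-- All weight spaces are finite dimensional. -/
def HasFinDimWeightSpaces : Prop :=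
  ∀ χ : Module.Dual ℂ S.cartan, FiniteDimensional ℂ (S.wtSpace V χ)

/-- Integrability: `V` is a weight module with finite dimensional weight spaces on which all
real root vectors `(x ⊗ tⁿ) ⊗ a`, `x ∈ g̊_α`, `α ∈ Δ̊`, act locally nilpotently. -/
def IsIntegrable : Prop :=
  S.IsWeightModule V ∧ S.HasFinDimWeightSpaces V ∧
    ∀ α : Module.Dual ℂ S.H, α ≠ 0 → S.rootSp α ≠ ⊥ →
      ∀ x ∈ S.rootSp α, ∀ (n : ℤ) (a : A) (v : V),
        ∃ N : ℕ, ((LieModule.toEnd ℂ L V) (S.E n x a) ^ N) v = 0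

/-- The highest weight space
`M = {v ∈ V : (x ⊗ tⁿ ⊗ a) v = 0 ∀ x ∈ g̊_α, α ∈ Δ̊₊, n ∈ ℤ, a ∈ A}` for the second
triangular decomposition. -/
def hwSpace : Submodule ℂ V where
  carrier := {v : V | ∀ α ∈ S.Δplus, ∀ x ∈ S.rootSp α, ∀ (n : ℤ) (a : A), ⁅S.E n x a, v⁆ = 0}
  add_mem' := by
    intro u w hu hw α hα x hx n a
    rw [lie_add, hu α hα x hx n a, hw α hα x hx n a, add_zero]
  zero_mem' := by
    intro α hα x hx n a
    rw [lie_zero]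
  smul_mem' := by
    intro t v hv α hα x hx n a
    rw [lie_smul, hv α hα x hx n a, smul_zero]

/-- Generators of `𝔏(A)⁺ = (n₊ ⊕ Vir⁺) ⊗ A` for the natural triangular decomposition. -/
def plusSet : Set L :=
  {z : L | ∃ n : ℤ, 0 < n ∧ ∃ (x : g) (a : A), z = S.E n x a} ∪
  {z : L | ∃ α ∈ S.Δplus, ∃ x ∈ S.rootSp α, ∃ a : A, z = S.E 0 x a} ∪
  {z : L | ∃ n : ℤ, 0 < n ∧ ∃ a : A, z = S.D n a}

/-- Generators of `𝔏(A)⁻ = (n₋ ⊕ Vir⁻) ⊗ A` for the natural triangular decomposition. -/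
def minusSet : Set L :=
  {z : L | ∃ n : ℤ, n < 0 ∧ ∃ (x : g) (a : A), z = S.E n x a} ∪
  {z : L | ∃ α ∈ S.Δplus, ∃ x ∈ S.rootSp (-α), ∃ a : A, z = S.E 0 x a} ∪
  {z : L | ∃ n : ℤ, n < 0 ∧ ∃ a : A, z = S.D n a}

/-- Generators of `𝔏(A)⁰ = h̄ ⊗ A`. -/
def cartanASet : Set L :=
  {z : L | ∃ h ∈ S.H, ∃ a : A, z = S.E 0 h a} ∪ {z : L | ∃ a : A, z = S.K a}
    ∪ {z : L | ∃ a : A, z = S.D 0 a} ∪ {z : L | ∃ a : A, z = S.C a}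

/-- `𝔏(A)⁰ = h̄ ⊗ A` as a subspace of `L`. -/
def cartanA : Submodule ℂ L := Submodule.span ℂ S.cartanASet

/-- `h ⊗ a`, `h ∈ h̊`, as an element of `h̄ ⊗ A`. -/
def eHA (h : S.H) (a : A) : S.cartanA :=
  ⟨S.E 0 h a, Submodule.subset_span
    (Set.mem_union_left _ (Set.mem_union_left _ (Set.mem_union_left _ ⟨(h : g), h.2, a, rfl⟩)))⟩

/-- `K ⊗ a` as an element of `h̄ ⊗ A`. -/
def KA (a : A) : S.cartanA :=
  ⟨S.K a, Submodule.subset_span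
    (Set.mem_union_left _ (Set.mem_union_left _ (Set.mem_union_right _ ⟨a, rfl⟩)))⟩

/-- `d₀ ⊗ a` as an element of `h̄ ⊗ A`. -/
def DA0 (a : A) : S.cartanA :=
  ⟨S.D 0 a, Submodule.subset_span (Set.mem_union_left _ (Set.mem_union_right _ ⟨a, rfl⟩))⟩

/-- `C ⊗ a` as an element of `h̄ ⊗ A`. -/
def CA (a : A) : S.cartanA :=
  ⟨S.C a, Submodule.subset_span (Set.mem_union_right _ ⟨a, rfl⟩)⟩

/-- `V` is a highest weight module with highest weight `ψ : h̄ ⊗ A → ℂ` for the natural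
triangular decomposition: some nonzero vector `v` is annihilated by `𝔏(A)⁺`, is a
`ψ`-eigenvector for `h̄ ⊗ A`, and generates `V`. -/
def IsHWModule (ψ : Module.Dual ℂ S.cartanA) : Prop :=
  ∃ v : V, v ≠ 0 ∧ (∀ z ∈ S.plusSet, ⁅z, v⁆ = 0) ∧
    (∀ h : S.cartanA, ⁅(h : L), v⁆ = ψ h • v) ∧
    ∀ W : LieSubmodule ℂ L V, v ∈ W → W = ⊤

/-- `(𝔏 ⊗ I) ⬝ V = 0`. -/
def Annihilates (I : Ideal A) : Prop :=
  ∀ a ∈ I, (∀ (n : ℤ) (x : g) (v : V), ⁅S.E n x a, v⁆ = 0) ∧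
    (∀ (n : ℤ) (v : V), ⁅S.D n a, v⁆ = 0) ∧
    (∀ v : V, ⁅S.K a, v⁆ = 0) ∧ (∀ v : V, ⁅S.C a, v⁆ = 0)

/-- `(𝔏₀ ⊗ R)` kills the subspace `X`, where `𝔏₀ = (h̊ ⊗ ℂ[t,t⁻¹] ⊕ ℂK) ⋊ Vir`. -/
def ZeroPartAnnOn (R : Ideal A) (X : Submodule ℂ V) : Prop :=
  ∀ a ∈ R, ∀ v ∈ X,
    (∀ (n : ℤ) (h : g), h ∈ S.H → ⁅S.E n h a, v⁆ = 0) ∧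
    (∀ n : ℤ, ⁅S.D n a, v⁆ = 0) ∧ ⁅S.K a, v⁆ = 0 ∧ ⁅S.C a, v⁆ = 0

/-- Generators of `𝔏(A)₀ = ((h̊ ⊗ ℂ[t,t⁻¹] ⊕ ℂK) ⋊ Vir) ⊗ A`. -/
def zeroPartSet : Set L :=
  {z : L | ∃ (n : ℤ) (h : g), h ∈ S.H ∧ ∃ a : A, z = S.E n h a}
    ∪ {z : L | ∃ a : A, z = S.K a}
    ∪ {z : L | ∃ (n : ℤ) (a : A), z = S.D n a}
    ∪ {z : L | ∃ a : A, z = S.C a}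

/-- Generators of `g(A) = (g̊ ⊗ ℂ[t,t⁻¹] ⊕ ℂK ⊕ ℂd₀) ⊗ A`. -/
def gASet : Set L :=
  {z : L | ∃ (n : ℤ) (x : g) (a : A), z = S.E n x a}
    ∪ {z : L | ∃ a : A, z = S.K a} ∪ {z : L | ∃ a : A, z = S.D 0 a}

/-- Generators of `(h̊ ⊗ ℂ[t,t⁻¹] ⊕ ℂK) ⊗ A`. -/
def heisSet : Set L :=
  {z : L | ∃ (n : ℤ) (h : g), h ∈ S.H ∧ ∃ a : A, z = S.E n h a}
    ∪ {z : L | ∃ a : A, z = S.K a}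

/-- The smallest subspace of `V` containing `X` and stable under the operators in `Ops`;
this models `U(⋯) ⬝ X`. -/
def opClosure (Ops : Set L) (X : Submodule ℂ V) : Submodule ℂ V :=
  sInf {N : Submodule ℂ V | X ≤ N ∧ ∀ z ∈ Ops, ∀ v ∈ N, ⁅z, v⁆ ∈ N}

/-- The reflection `λ ↦ λ - λ(b) • β` on `h̄*`. -/
def reflMap (b : S.cartan) (β : Module.Dual ℂ S.cartan) :
    Module.End ℂ (Module.Dual ℂ S.cartan) :=
  LinearMap.id - LinearMap.smulRight (Module.Dual.eval ℂ S.cartan b) β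

/-- Given `ν⁻¹ : h̊* → h̊` (inverse of the form), the coroot
`β∨ = α∨ + (2 / ⟨α,α⟩) K ∈ h̄` of the real root `β = α + nδ`. -/
def corootOf (nu : Module.Dual ℂ S.H → S.H) (α : Module.Dual ℂ S.H) : S.cartan :=
  (2 / α (nu α)) • (S.eH (nu α) + S.K1)

/-- The (affine) Weyl group `W` of `𝔏(A)`, generated by the reflections in the real
roots `β = α + nδ`, acting on `h̄*`. -/
def weylMonoid (nu : Module.Dual ℂ S.H → S.H)
    (ext : Module.Dual ℂ S.H →ₗ[ℂ] Module.Dual ℂ S.cartan)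
    (δf : Module.Dual ℂ S.cartan) :
    Submonoid (Module.End ℂ (Module.Dual ℂ S.cartan)) :=
  Submonoid.closure {w | ∃ (α : Module.Dual ℂ S.H) (n : ℤ), α ≠ 0 ∧ S.rootSp α ≠ ⊥ ∧
    w = S.reflMap (S.corootOf nu α) (ext α + (n : ℂ) • δf)}

/-- The reflection `σ_α : h ↦ h - α(h) • α∨` on `h̊`. -/
def finReflMap (nu : Module.Dual ℂ S.H → S.H) (α : Module.Dual ℂ S.H) :
    Module.End ℂ S.H :=
  LinearMap.id - LinearMap.smulRight (α : S.H →ₗ[ℂ] ℂ) ((2 / α (nu α)) • nu α)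

/-- The finite Weyl group `W̊` of `g̊`, acting on `h̊`. -/
def finWeyl (nu : Module.Dual ℂ S.H → S.H) : Submonoid (Module.End ℂ S.H) :=
  Submonoid.closure {w | ∃ α : Module.Dual ℂ S.H, α ≠ 0 ∧ S.rootSp α ≠ ⊥ ∧
    w = S.finReflMap nu α}

/-- `ℤ[W̊(θ∨)] ⊆ h̊`: the additive group generated by the `W̊`-orbit of `θ∨`. -/
def thetaOrbitSpan (nu : Module.Dual ℂ S.H → S.H) (θ : Module.Dual ℂ S.H) :
    AddSubgroup S.H :=
  AddSubgroup.closure {h | ∃ w ∈ S.finWeyl nu, h = w ((2 / θ (nu θ)) • nu θ)}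

/-- The `d₀`-eigenspace of `V` for the eigenvalue `μ`. -/
def d0Eig (μ : ℂ) : Submodule ℂ V where
  carrier := {v : V | ⁅S.D 0 1, v⁆ = μ • v}
  add_mem' := by
    intro a b ha hb
    show ⁅S.D 0 1, a + b⁆ = μ • (a + b)
    rw [lie_add, ha, hb, smul_add]
  zero_mem' := by
    show ⁅S.D 0 1, (0 : V)⁆ = μ • (0 : V)
    rw [lie_zero, smul_zero]
  smul_mem' := by
    intro c v hv
    show ⁅S.D 0 1, c • v⁆ = μ • c • v
    rw [lie_smul, hv, smul_comm]

end LoopAffVir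

end

open Finset in
theorem RootPairing.sum_pairingIn_pos {ι R M N : Type*} [CommRing R] [CharZero R]
    [AddCommGroup M] [Module R M] [AddCommGroup N] [Module R N] (P : RootPairing ι R M N)
    [P.IsCrystallographic] (s : Finset ι)
    (hneg : ∀ j ∈ s, P.reflectionPerm j j ∉ s)
    (hrefl : ∀ i ∈ s, ∀ j ∈ s, P.pairingIn ℤ i j < 0 → P.reflectionPerm j i ∈ s)
    {j : ι} (hj : j ∈ s) : 0 < ∑ i ∈ s, P.pairingIn ℤ i j := by
  classical
  have hp : ∀ i, P.pairingIn ℤ (P.reflectionPerm j i) j = - P.pairingIn ℤ i j := by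
    intro i
    rw [← P.pairingIn_reflectionPerm_self_right ℤ i j]
    apply (algebraMap ℤ R).injective_int
    simp only [RootPairing.algebraMap_pairingIn, P.pairing_reflectionPerm]
  have hself : P.pairingIn ℤ j j = 2 := P.pairingIn_same ℤ j
  set n := s.filter (fun i => P.pairingIn ℤ i j < 0) with hn
  set m := s.filter (fun i => ¬ P.pairingIn ℤ i j < 0) with hm
  have hsplit : ∑ i ∈ s, P.pairingIn ℤ i j =
      ∑ i ∈ n, P.pairingIn ℤ i j + ∑ i ∈ m, P.pairingIn ℤ i j :=
    (sum_filter_add_sum_filter_not s _ _).symm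
  have hinj : ∑ i ∈ n.image (P.reflectionPerm j), P.pairingIn ℤ i j =
      ∑ i ∈ n, P.pairingIn ℤ (P.reflectionPerm j i) j :=
    sum_image (fun x _ y _ h => (P.reflectionPerm j).injective h)
  have hjn : j ∉ n.image (P.reflectionPerm j) := by
    intro h
    obtain ⟨i, hi, hij⟩ := mem_image.mp h
    apply hneg j hj
    rw [← P.reflectionPerm_self j i, hij] at hi
    exact (mem_filter.mp hi).1
  have hsub : insert j (n.image (P.reflectionPerm j)) ⊆ m := by
    intro k hk
    rcases mem_insert.mp hk with rfl | hk
    · simp [hm, hj]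
    · obtain ⟨i, hi, rfl⟩ := mem_image.mp hk
      obtain ⟨his, hi0⟩ := mem_filter.mp hi
      simp only [hm, mem_filter]
      exact ⟨hrefl i his j hj hi0, by rw [hp]; omega⟩
  have hle := sum_le_sum_of_subset_of_nonneg (f := fun i => P.pairingIn ℤ i j) hsub
    (fun i hi _ => not_lt.mp (mem_filter.mp hi).2)
  rw [sum_insert hjn, hinj, hself] at hle
  simp only [hp, sum_neg_distrib] at hle
  omega

theorem RootPairing.sum_pairingIn_mul_sum_pairingIn_pos {ι R M N : Type*} [CommRing R] [CharZero R]
    [AddCommGroup M] [Module R M] [AddCommGroup N] [Module R N] (P : RootPairing ι R M N)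
    [P.IsCrystallographic] [Fintype ι] (s : Finset ι)
    (hneg : ∀ j ∈ s, P.reflectionPerm j j ∉ s)
    (hrefl : ∀ i ∈ s, ∀ j ∈ s, P.pairingIn ℤ i j < 0 → P.reflectionPerm j i ∈ s)
    {j : ι} (hj : j ∈ s) :
    0 < ∑ k, P.pairingIn ℤ j k * ∑ i ∈ s, P.pairingIn ℤ i k := by
  have h1 := P.sum_pairingIn_pos s hneg hrefl hj
  have h2 : 0 < (P.posRootForm ℤ).rootLength j := (P.posRootForm ℤ).rootLength_pos j
  have h3 : ∀ i, 2 * ∑ k, P.pairingIn ℤ j k * P.pairingIn ℤ i k =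
      P.pairingIn ℤ i j * (P.posRootForm ℤ).rootLength j := by
    intro i
    apply (algebraMap ℤ R).injective_int
    have h := (P.posRootForm ℤ).two_mul_apply_root_root i j
    rw [← (P.posRootForm ℤ).algebraMap_rootLength, ← P.algebraMap_pairingIn ℤ] at h
    rw [map_mul, map_mul, ← h]
    simp only [RootPairing.posRootForm, P.rootForm_apply_apply, map_sum, map_mul,
      P.algebraMap_pairingIn, P.root_coroot'_eq_pairing]
    simp [mul_comm]
  have h4 : 2 * ∑ k, P.pairingIn ℤ j k * ∑ i ∈ s, P.pairingIn ℤ i k =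
      (∑ i ∈ s, P.pairingIn ℤ i j) * (P.posRootForm ℤ).rootLength j := by
    rw [Finset.sum_mul, ← Finset.sum_congr rfl fun i _ => h3 i, ← Finset.mul_sum, Finset.sum_comm]
    simp only [Finset.mul_sum]
  have := mul_pos h1 h2
  omega

section KillingRoots

open LieAlgebra LieAlgebra.IsKilling LieModule

variable {K L : Type*} [Field K] [CharZero K] [LieRing L] [LieAlgebra K L]
  [IsKilling K L] [FiniteDimensional K L]
  {H : LieSubalgebra K L} [H.IsCartanSubalgebra] [IsTriangularizable K H L]

theorem LieSubalgebra.rootSpace_le_of_sub_nsmul (p : LieSubalgebra K L) {α β γ : Weight K H L}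
    (hα : α.IsNonZero) (hγ : γ.IsNonZero)
    (hpα : ∀ x ∈ rootSpace H (-α), x ∈ p) (hpβ : ∀ x ∈ rootSpace H β, x ∈ p)
    (k : ℕ) (hk : β (coroot α) = k) (hγβ : (γ : H → K) = β - k • (α : H → K)) :
    ∀ x ∈ rootSpace H γ, x ∈ p := by
  obtain ⟨x, hx, x_ne0⟩ := (chainTop α β).exists_ne_zero
  obtain ⟨h, e, f, isSl2, he, hf⟩ := exists_isSl2Triple_of_weight_isNonZero hα
  obtain rfl := isSl2.h_eq_coroot hα he hf
  have prim : isSl2.HasPrimitiveVectorWith x (chainLength α β : K) :=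
    have := lie_mem_genWeightSpace_of_mem_genWeightSpace he hx
    ⟨x_ne0, (chainLength_smul _ _ hx).symm, by rwa [genWeightSpace_add_chainTop _ _ hα] at this⟩
  have hkt : (k : ℤ) = chainBotCoeff α β - chainTopCoeff α β := by
    rw [apply_coroot_eq_cast] at hk
    exact_mod_cast hk.symm
  have hlen := chainTopCoeff_add_chainBotCoeff α β
  set t := chainTopCoeff α β with ht
  have hw1 := toEnd_pow_apply_mem hf hx t
  have hw1' : ((toEnd K L L f) ^ t) x ∈ rootSpace H β := by
    convert hw1 using 2
    rw [coe_chainTop', ← ht, smul_neg, neg_add_cancel_left]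
  have hmem : ∀ n : ℕ, ((toEnd K L L f) ^ (n + t)) x ∈ p := by
    intro n
    induction n with
    | zero => simpa using hpβ _ hw1'
    | succ n ih =>
      rw [add_right_comm, pow_succ', Module.End.mul_apply]
      exact p.lie_mem (hpα f hf) ih
  have hw2 : ((toEnd K L L f) ^ (k + t)) x ∈ rootSpace H γ := by
    convert toEnd_pow_apply_mem hf hx (k + t) using 2
    rw [coe_chainTop', ← ht, smul_neg, hγβ, add_smul]
    abel
  have hne : ((toEnd K L L f) ^ (k + t)) x ≠ 0 :=
    prim.pow_toEnd_f_ne_zero_of_eq_nat rfl (by omega)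
  intro y hy
  obtain ⟨c, hc⟩ := (finrank_eq_one_iff_of_nonzero' (⟨_, hw2⟩ : rootSpace H γ)
    (by simpa [Subtype.ext_iff] using hne)).mp (finrank_rootSpace_eq_one _ hγ) ⟨y, hy⟩
  have hc' : c • ((toEnd K L L f) ^ (k + t)) x = y := congrArg Subtype.val hc
  rw [← hc']
  exact p.smul_mem c (hmem k)

/-- A subalgebra containing, for each root, one of the two opposite root spaces contains the
nonnegative part of the grading by some integral element of the Cartan subalgebra. -/
theorem LieSubalgebra.exists_neg_of_rootSpace_not_le (p : LieSubalgebra K L)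
    (hp : ∀ α : Weight K H L, α.IsNonZero →
      (∀ x ∈ rootSpace H α, x ∈ p) ∨ (∀ x ∈ rootSpace H (-α), x ∈ p)) :
    ∃ (h : H) (d : Weight K H L → ℤ), (∀ α : Weight K H L, α h = d α) ∧
      ∀ α : Weight K H L, α.IsNonZero → ¬ (∀ x ∈ rootSpace H α, x ∈ p) → d α < 0 := by
  classical
  let P := rootSystem H
  let s : Finset H.root := Finset.univ.filter fun α => ¬ (∀ x ∈ rootSpace H α.1, x ∈ p)
  have hs : ∀ α, α ∈ s ↔ ¬ (∀ x ∈ rootSpace H α.1, x ∈ p) := by simp [s]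
  have hneg' : ∀ j ∈ s, ∀ x ∈ rootSpace H (-j.1), x ∈ p := fun j hj =>
    (hp j.1 (isNonZero_coe_root j)).resolve_left ((hs j).mp hj)
  have hneg : ∀ j ∈ s, P.reflectionPerm j j ∉ s := by
    intro j hj hjs
    apply (hs _).mp hjs
    have : ((P.reflectionPerm j j).1 : H → K) = -j.1 := by
      have := P.root_reflectionPerm j j
      rw [P.reflection_apply_self] at this
      exact congrArg DFunLike.coe this
    rw [this]
    exact hneg' j hj
  have hrefl : ∀ i ∈ s, ∀ j ∈ s, P.pairingIn ℤ i j < 0 → P.reflectionPerm j i ∈ s := by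
    intro i hi j hj hij
    by_contra hns
    rw [hs, not_not] at hns
    have hpair : ((P.pairingIn ℤ i j : ℤ) : K) = i.1 (coroot j.1) := by
      have := P.algebraMap_pairingIn ℤ i j
      simpa [P] using this
    obtain ⟨k, hk⟩ := Int.eq_ofNat_of_zero_le (a := - P.pairingIn ℤ i j) (by omega)
    have hk' : i.1 (coroot j.1) = -(k : K) := by
      rw [← hpair, ← Int.cast_natCast, ← Int.cast_neg, ← hk, neg_neg]
    have hr : ((P.reflectionPerm j i).1 : H → K) = i.1 + k • (j.1 : H → K) := by
      have := P.root_reflectionPerm j i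
      rw [P.reflection_apply_root] at this
      have h2 := congrArg DFunLike.coe this
      funext y
      have h3 := congrFun h2 y
      simp only [P, rootSystem_root_apply, rootSystem_pairing_apply, hk'] at h3
      simpa [P] using h3
    apply (hs i).mp hi
    refine rootSpace_le_of_sub_nsmul p (isNonZero_coe_root j) (isNonZero_coe_root i)
      (hneg' j hj) hns k ?_ ?_
    · rw [hr]
      simp [hk', root_apply_coroot (isNonZero_coe_root j)]
      ring
    · rw [hr]; simp
  let c : H.root → ℤ := fun k => ∑ i ∈ s, P.pairingIn ℤ i k
  refine ⟨- ∑ k, c k • coroot k.1, fun α => if hα : α.IsZero then 0 else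
    - ∑ k, P.pairingIn ℤ ⟨α, by simpa using hα⟩ k * c k, ?_, ?_⟩
  · intro α
    by_cases hα : α.IsZero
    · simp [hα, hα.eq]
    · beta_reduce
      rw [dif_neg hα]
      have : ∀ k, ((P.pairingIn ℤ ⟨α, by simpa using hα⟩ k : ℤ) : K) = α (coroot k.1) := by
        intro k
        have := P.algebraMap_pairingIn ℤ ⟨α, by simpa using hα⟩ k
        simpa [P] using this
      have h1 : α (- ∑ k, c k • coroot k.1) = - ∑ k, c k • α (coroot k.1) := by
        simp
      rw [h1]
      push_cast
      simp only [this, zsmul_eq_mul, mul_comm]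
  · intro α hα hαp
    beta_reduce
    rw [dif_neg hα]
    have := P.sum_pairingIn_mul_sum_pairingIn_pos s hneg hrefl
      (j := ⟨α, by simpa using hα⟩) (by rw [hs]; exact hαp)
    simp only [c]
    omega

end KillingRoots

section GradedGeneration

open LieModule Module.End

variable {K L V : Type*} [Field K] [LieRing L] [LieAlgebra K L]
  [AddCommGroup V] [Module K V] [LieRingModule L V] [LieModule K L V]

theorem LieSubmodule.exists_between_of_stable {M B : Set L} (hMB : Submodule.span K (M ∪ B) = ⊤)
    {X Y : Submodule K V} (hXY : X ≤ Y) (hB : ∀ z ∈ B, ∀ x ∈ X, ⁅z, x⁆ ∈ X)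
    (hM : ∀ z ∈ M, ∀ y ∈ Y, ⁅z, y⁆ ∈ Y) :
    ∃ W : LieSubmodule K L V, X ≤ W.toSubmodule ∧ W.toSubmodule ≤ Y := by
  let Y₀ : Submodule K V := sInf {N | X ≤ N ∧ ∀ z ∈ M, ∀ y ∈ N, ⁅z, y⁆ ∈ N}
  have hXY₀ : X ≤ Y₀ := le_sInf fun N hN => hN.1
  have hMY₀ : ∀ z ∈ M, ∀ y ∈ Y₀, ⁅z, y⁆ ∈ Y₀ := by
    intro z hz y hy
    rw [Submodule.mem_sInf] at hy ⊢
    exact fun N hN => hN.2 z hz y (hy N hN)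
  let W : Submodule K V :=
    { carrier := {w | w ∈ Y₀ ∧ ∀ z : L, ⁅z, w⁆ ∈ Y₀}
      add_mem' := fun {a b} ha hb => ⟨add_mem ha.1 hb.1, fun z => by
        rw [lie_add]; exact add_mem (ha.2 z) (hb.2 z)⟩
      zero_mem' := ⟨zero_mem _, fun z => by rw [lie_zero]; exact zero_mem _⟩
      smul_mem' := fun t a ha => ⟨Y₀.smul_mem t ha.1, fun z => by
        rw [lie_smul]; exact Y₀.smul_mem t (ha.2 z)⟩ }
  have hXW : X ≤ W := by
    refine fun x hx => ⟨hXY₀ hx, fun z => ?_⟩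
    have hz : z ∈ Submodule.span K (M ∪ B) := hMB ▸ Submodule.mem_top
    induction hz using Submodule.span_induction with
    | mem z hz =>
      rcases hz with hz | hz
      · exact hMY₀ z hz x (hXY₀ hx)
      · exact hXY₀ (hB z hz x hx)
    | zero => rw [zero_lie]; exact zero_mem _
    | add a b _ _ ha hb => rw [add_lie]; exact add_mem ha hb
    | smul t a _ ha => rw [smul_lie]; exact Y₀.smul_mem t ha
  have hYW : Y₀ ≤ W := by
    refine sInf_le ⟨hXW, fun y hy w hw => ⟨hMY₀ y hy w hw.1, fun z => ?_⟩⟩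
    rw [leibniz_lie]
    exact add_mem (hw.2 _) (hMY₀ y hy _ (hw.2 z))
  refine ⟨{ W with lie_mem := fun {x w} hw => hYW (hw.2 x) }, hXW, fun w hw => ?_⟩
  have h : Y₀ ≤ Y := sInf_le ⟨hXY, hM⟩
  exact h hw.1

theorem LieModule.lie_mem_eigenspace_toEnd {e y : L} {r μ : K} {w : V}
    (hy : ⁅e, y⁆ = r • y) (hw : w ∈ (toEnd K L V e).eigenspace μ) :
    ⁅y, w⁆ ∈ (toEnd K L V e).eigenspace (μ + r) := by
  rw [mem_eigenspace_iff, toEnd_apply_apply] at hw ⊢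
  rw [leibniz_lie, hy, hw, smul_lie, lie_smul, ← add_smul, add_comm]

/-- In an irreducible module generated by a highest weight vector `v`, an ideal whose action
on `v` strictly lowers the degree acts by zero. -/
theorem LieModule.lie_eq_zero_of_lowers_degree [CharZero K] {M B : Set L}
    (hMB : Submodule.span K (M ∪ B) = ⊤) {e : L} {c : K} {v : V} (hv : v ≠ 0)
    (hev : ⁅e, v⁆ = c • v) (hB : ∀ z ∈ B, ∃ s : K, ⁅z, v⁆ = s • v)
    (hM : ∀ y ∈ M, ∃ k : ℕ, 0 < k ∧ ⁅e, y⁆ = -(k : K) • y)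
    (hirr : IsSimpleOrder (LieSubmodule K L V)) {G : Set L}
    (hG : ∀ x : L, ∀ z ∈ Submodule.span K G, ⁅x, z⁆ ∈ Submodule.span K G)
    (hGv : ∀ z ∈ G, ⁅z, v⁆ = 0 ∨ ∃ k : ℕ, 0 < k ∧ ⁅e, z⁆ = -(k : K) • z) :
    ∀ z ∈ Submodule.span K G, ∀ w : V, ⁅z, w⁆ = 0 := by
  have hve : v ∈ (toEnd K L V e).eigenspace c := by rwa [mem_eigenspace_iff, toEnd_apply_apply]
  let Y : Submodule K V := ⨆ k : ℕ, (toEnd K L V e).eigenspace (c - (k + 1 : ℕ))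
  have hvY : v ∉ Y := by
    intro hvY
    have hle : Y ≤ ⨆ μ, ⨆ (_ : μ ≠ c), (toEnd K L V e).eigenspace μ := by
      refine iSup_le fun k => le_iSup₂_of_le (c - (k + 1 : ℕ)) ?_ le_rfl
      rw [ne_eq, sub_eq_self]
      exact Nat.cast_ne_zero.mpr k.succ_ne_zero
    exact hv (Submodule.disjoint_def.mp ((eigenspaces_iSupIndep (toEnd K L V e)) c) v hve (hle hvY))
  let f : L →ₗ[K] V := (toEnd K L V : L →ₗ[K] Module.End K V).flip v
  have hf : ∀ z, f z = ⁅z, v⁆ := fun z => rfl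
  let X : Submodule K V := (Submodule.span K G).map f
  have hXY : X ≤ Y := by
    rw [Submodule.map_span_le]
    intro z hz
    rw [hf]
    rcases hGv z hz with h | ⟨k, hk, h⟩
    · rw [h]; exact zero_mem _
    · obtain ⟨k, rfl⟩ := Nat.exists_eq_add_of_lt hk
      refine Submodule.mem_iSup_of_mem k ?_
      have := lie_mem_eigenspace_toEnd h hve
      rwa [zero_add, ← sub_eq_add_neg] at this
  have hBX : ∀ z ∈ B, ∀ x ∈ X, ⁅z, x⁆ ∈ X := by
    rintro z hz _ ⟨y, hy, rfl⟩
    obtain ⟨s, hs⟩ := hB z hz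
    rw [hf, leibniz_lie, hs, lie_smul]
    exact add_mem ⟨_, hG z y hy, rfl⟩ (X.smul_mem s ⟨y, hy, rfl⟩)
  have hMY : ∀ z ∈ M, ∀ y ∈ Y, ⁅z, y⁆ ∈ Y := by
    intro z hz y hy
    obtain ⟨k, hk, h⟩ := hM z hz
    induction hy using Submodule.iSup_induction' with
    | mem i y hy =>
      refine Submodule.mem_iSup_of_mem (i + k) ?_
      have := lie_mem_eigenspace_toEnd h hy
      convert this using 2
      push_cast
      ring
    | zero => rw [lie_zero]; exact zero_mem _
    | add a b _ _ ha hb => rw [lie_add]; exact add_mem ha hb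
  obtain ⟨W, hXW, hWY⟩ := LieSubmodule.exists_between_of_stable hMB hXY hBX hMY
  have hW : W = ⊥ := by
    refine (eq_bot_or_eq_top W).resolve_right ?_
    rintro rfl
    exact hvY (hWY Submodule.mem_top)
  have hGv0 : ∀ z ∈ Submodule.span K G, ⁅z, v⁆ = 0 := by
    intro z hz
    have : ⁅z, v⁆ ∈ W := hXW ⟨z, hz, rfl⟩
    rwa [hW, LieSubmodule.mem_bot] at this
  let A : LieSubmodule K L V :=
    { carrier := {w | ∀ z ∈ Submodule.span K G, ⁅z, w⁆ = 0}
      add_mem' := fun {a b} ha hb z hz => by rw [lie_add, ha z hz, hb z hz, add_zero]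
      zero_mem' := fun z _ => lie_zero z
      smul_mem' := fun t a ha z hz => by rw [lie_smul, ha z hz, smul_zero]
      lie_mem := fun {x w} hw z hz => by
        rw [leibniz_lie, hw z hz, lie_zero, add_zero, ← lie_skew, neg_lie, hw _ (hG x z hz),
          neg_zero] }
  have hA : A = ⊤ := by
    refine (eq_bot_or_eq_top A).resolve_left fun h => hv ?_
    have : v ∈ A := hGv0
    rwa [h, LieSubmodule.mem_bot] at this
  intro z hz w
  have : w ∈ A := hA ▸ LieSubmodule.mem_top w
  exact this z hz

/-- In a highest weight module graded by the eigenvalues of `e`, where the degree `-k` lowering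
operators lie in a finite-dimensional space, the eigenspaces of `e` are finite-dimensional. -/
theorem LieModule.finiteDimensional_eigenspace_toEnd [CharZero K] {M B : Set L}
    (hMB : Submodule.span K (M ∪ B) = ⊤) {e : L} {c : K} {v : V}
    (hev : ⁅e, v⁆ = c • v) (hB : ∀ z ∈ B, ∃ s : K, ⁅z, v⁆ = s • v)
    (hgen : ∀ W : LieSubmodule K L V, v ∈ W → W = ⊤)
    (T : ℕ → Submodule K (Module.End K V)) [∀ k, FiniteDimensional K (T k)] (hT : Monotone T)
    (hM : ∀ y ∈ M, ∃ k : ℕ, 0 < k ∧ ⁅e, y⁆ = -(k : K) • y ∧ toEnd K L V y ∈ T k) (μ : K) :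
    FiniteDimensional K ((toEnd K L V e).eigenspace μ) := by
  have hve : v ∈ (toEnd K L V e).eigenspace c := by rwa [mem_eigenspace_iff, toEnd_apply_apply]
  obtain ⟨F, hFzero, hFsucc⟩ : ∃ F : ℕ → Submodule K V, F 0 = Submodule.span K {v} ∧
      ∀ k, F (k + 1) = F k ⊔ Submodule.map₂ LinearMap.id (T (k + 1)) (F k) :=
    ⟨fun k => Nat.rec (Submodule.span K {v})
      (fun k N => N ⊔ Submodule.map₂ LinearMap.id (T (k + 1)) N) k, rfl, fun _ => rfl⟩
  have hFfin : ∀ k : ℕ, (F k).FG := by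
    intro k
    induction k with
    | zero => exact hFzero ▸ Submodule.fg_span_singleton v
    | succ k ih =>
      rw [hFsucc]
      exact ih.sup (Submodule.FG.map₂ _ (Module.Finite.iff_fg.mp inferInstance) ih)
  have hFmono : Monotone F := monotone_nat_of_le_succ fun k => by
    rw [hFsucc]; exact le_sup_left
  have hTF : ∀ i k : ℕ, 0 < i → ∀ t ∈ T i, ∀ w ∈ F k, t w ∈ F (k + i) := by
    intro i k hi t ht w hw
    obtain ⟨j, rfl⟩ := Nat.exists_eq_add_of_lt hi
    rw [zero_add, ← add_assoc, hFsucc]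
    exact Submodule.mem_sup_right (Submodule.apply_mem_map₂ LinearMap.id
      (hT (by omega) ht) (hFmono (Nat.le_add_right k j) hw))
  let Z : Submodule K V := ⨆ k : ℕ, F k ⊓ (toEnd K L V e).eigenspace (c - k)
  have hvZ : Submodule.span K {v} ≤ Z := by
    rw [Submodule.span_singleton_le_iff_mem]
    exact Submodule.mem_iSup_of_mem 0
      ⟨hFzero ▸ Submodule.mem_span_singleton_self v, by simpa using hve⟩
  obtain ⟨W, hvW, hWZ⟩ := LieSubmodule.exists_between_of_stable hMB hvZ (by
    intro z hz x hx
    obtain ⟨a, rfl⟩ := Submodule.mem_span_singleton.mp hx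
    have hx' := Submodule.mem_span_singleton_self (R := K) v
    obtain ⟨s, hs⟩ := hB z hz
    rw [lie_smul, hs]
    exact Submodule.smul_mem _ a (Submodule.smul_mem _ s hx')) (by
    intro z hz y hy
    obtain ⟨k, hk, h, hTk⟩ := hM z hz
    induction hy using Submodule.iSup_induction' with
    | mem i y hy =>
      refine Submodule.mem_iSup_of_mem (i + k) ⟨hTF k i hk _ hTk y hy.1, ?_⟩
      have := lie_mem_eigenspace_toEnd h hy.2
      rwa [← sub_eq_add_neg, sub_sub, ← Nat.cast_add] at this
    | zero => rw [lie_zero]; exact zero_mem _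
    | add a b _ _ ha hb => rw [lie_add]; exact add_mem ha hb)
  have hZ : Z = ⊤ := by
    rw [hgen W (hvW (Submodule.mem_span_singleton_self v))] at hWZ
    exact top_le_iff.mp hWZ
  let Q : Submodule K V :=
    ⨆ k : {k : ℕ // c - k = μ}, F k ⊓ (toEnd K L V e).eigenspace (c - (k : ℕ))
  let R : Submodule K V := ⨆ ν, ⨆ (_ : ν ≠ μ), (toEnd K L V e).eigenspace ν
  have hsub : Subsingleton {k : ℕ // c - k = μ} := ⟨fun a b => by
    have := a.2.trans b.2.symm
    exact Subtype.ext (by simpa using this)⟩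
  have hQfin : FiniteDimensional K Q := by
    have : ∀ k : {k : ℕ // c - k = μ}, FiniteDimensional K
      (F k ⊓ (toEnd K L V e).eigenspace (c - (k : ℕ)) : Submodule K V) := fun k =>
        have := Module.Finite.iff_fg.mpr (hFfin k)
        Submodule.finiteDimensional_inf_left _ _
    exact Submodule.finiteDimensional_iSup _
  have hQ : Q ≤ (toEnd K L V e).eigenspace μ := iSup_le fun k => inf_le_right.trans (by rw [k.2])
  have hQR : Q ⊔ R = ⊤ := by
    rw [eq_top_iff, ← hZ]
    refine iSup_le fun k => ?_
    by_cases hk : c - (k : K) = μ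
    · exact le_sup_of_le_left (le_iSup (fun k : {k : ℕ // c - k = μ} =>
        F k ⊓ (toEnd K L V e).eigenspace (c - (k : ℕ))) ⟨k, hk⟩)
    · exact le_sup_of_le_right (le_iSup₂_of_le (c - (k : K)) hk inf_le_right)
  have hdisj : R ⊓ (toEnd K L V e).eigenspace μ = ⊥ :=
    disjoint_iff.mp ((eigenspaces_iSupIndep (toEnd K L V e)) μ).symm
  have heq : (toEnd K L V e).eigenspace μ = Q := by
    rw [← top_inf_eq ((toEnd K L V e).eigenspace μ), ← hQR, sup_inf_assoc_of_le R hQ, hdisj,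
      sup_bot_eq]
  rw [heq]
  exact hQfin

end GradedGeneration

namespace LoopAffVir

variable {g A L : Type*} [LieRing g] [LieAlgebra ℂ g] [CommRing A] [Algebra ℂ A]
  [LieRing L] [LieAlgebra ℂ L] (S : LoopAffVir g A L)

section Roots

open LieAlgebra LieAlgebra.IsKilling LieModule

variable [FiniteDimensional ℂ g] [LieAlgebra.IsSimple ℂ g]

/-- A subalgebra containing all positive root spaces contains, modulo `h̊`, the nonnegative part
of the grading of `g̊` by some integral `h ∈ h̊`. -/
theorem exists_grading (p : LieSubalgebra ℂ g)
    (hp : ∀ α ∈ S.Δplus, ∀ x ∈ S.rootSp α, x ∈ p) :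
    ∃ h ∈ S.H, ∃ N : ℕ, Submodule.span ℂ {x : g | ∃ d : ℤ, |d| ≤ N ∧ ⁅h, x⁆ = (d : ℂ) • x ∧
      (x ∈ S.H ∨ x ∈ p ∨ d < 0)} = ⊤ := by
  have := S.isCartan
  have key : ∀ (α : Module.Dual ℂ S.H), ∀ x ∈ rootSpace S.H α, x ∈ S.rootSp α := by
    intro α x hx
    rw [S.rootSp_def]
    exact fun h => lie_eq_smul_of_mem_rootSpace hx h
  have hp' : ∀ α : Weight ℂ S.H g, α.IsNonZero →
      (∀ x ∈ rootSpace S.H α, x ∈ p) ∨ (∀ x ∈ rootSpace S.H (-α), x ∈ p) := by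
    intro α hα
    have h0 : (Weight.toLinear ℂ S.H g α : Module.Dual ℂ S.H) ≠ 0 := by
      intro h
      apply hα
      simpa using h
    have h1 : S.rootSp (Weight.toLinear ℂ S.H g α) ≠ ⊥ := by
      obtain ⟨x, hx, hx0⟩ := α.exists_ne_zero
      exact fun h => hx0 ((Submodule.eq_bot_iff _).mp h x (key _ x hx))
    rcases S.Δplus_cover _ h0 h1 with h | h
    · exact Or.inl fun x hx => hp _ h x (key _ x hx)
    · exact Or.inr fun x hx => hp _ h x (key _ x hx)
  obtain ⟨h, d, hd, hneg⟩ := LieSubalgebra.exists_neg_of_rootSpace_not_le (H := S.H) p hp'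
  refine ⟨h, h.2, ∑ α, (d α).natAbs, ?_⟩
  rw [eq_top_iff]
  have htop := congrArg LieSubmodule.toSubmodule (iSup_genWeightSpace_eq_top' ℂ S.H g)
  rw [LieSubmodule.iSup_toSubmodule, LieSubmodule.top_toSubmodule] at htop
  rw [← htop]
  refine iSup_le fun α x hx => Submodule.subset_span ⟨d α, ?_, ?_, ?_⟩
  · rw [Int.abs_eq_natAbs]
    exact_mod_cast Finset.single_le_sum (f := fun α => (d α).natAbs) (fun _ _ => Nat.zero_le _)
      (Finset.mem_univ α)
  · rw [← hd]
    exact lie_eq_smul_of_mem_rootSpace hx h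
  · by_cases hα : α.IsZero
    · left
      have hx' : x ∈ rootSpace S.H (0 : S.H → ℂ) := by
        rw [← hα.eq]; exact hx
      rw [LieAlgebra.rootSpace_zero_eq] at hx'
      exact hx'
    · by_cases hαp : ∀ x ∈ rootSpace S.H α, x ∈ p
      · exact Or.inr (Or.inl (hαp x hx))
      · exact Or.inr (Or.inr (hneg α hα hαp))

/-- The invariant form does not vanish identically on `h̊`. -/
theorem exists_form_ne_zero : ∃ h ∈ S.H, ∃ h' ∈ S.H, S.form h' h ≠ 0 := by
  have := S.isCartan
  by_contra! hform
  have hzero : ∀ h ∈ S.H, h = 0 := by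
    intro h hh
    apply S.form_nondeg
    intro y
    have htop := congrArg LieSubmodule.toSubmodule (iSup_genWeightSpace_eq_top' ℂ S.H g)
    rw [LieSubmodule.iSup_toSubmodule, LieSubmodule.top_toSubmodule] at htop
    have hle : (⊤ : Submodule ℂ g) ≤ LinearMap.ker (S.form h) := by
      rw [← htop]
      refine iSup_le fun α x hx => ?_
      rw [LinearMap.mem_ker]
      by_cases hα : α.IsZero
      · have hx' : x ∈ rootSpace S.H (0 : S.H → ℂ) := by
          rw [← hα.eq]; exact hx
        rw [LieAlgebra.rootSpace_zero_eq] at hx'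
        exact hform x hx' h hh
      · obtain ⟨k, hk⟩ := Function.ne_iff.mp (fun h => hα h : (α : S.H → ℂ) ≠ 0)
        have h1 : ⁅(k : g), x⁆ = α k • x := lie_eq_smul_of_mem_rootSpace hx k
        have h2 : ⁅h, (k : g)⁆ = 0 := congrArg Subtype.val (trivial_lie_zero S.H S.H ⟨h, hh⟩ k)
        have h3 := S.form_invariant h k x
        rw [h1, h2, map_zero, LinearMap.zero_apply, map_smul, smul_eq_mul] at h3
        exact (mul_eq_zero.mp h3.symm).resolve_left hk
    exact hle Submodule.mem_top
  have htop : ∀ x : g, x ∈ S.H := by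
    intro x
    rw [← LieSubalgebra.IsCartanSubalgebra.self_normalizing (H := S.H),
      LieSubalgebra.mem_normalizer_iff]
    intro y hy
    rw [hzero y hy, lie_zero]
    exact zero_mem _
  exact IsSimple.non_abelian ℂ (L := g) ⟨fun x y => by rw [hzero x (htop x), zero_lie]⟩

end Roots

end LoopAffVir

namespace LoopAffVir

variable {g A L : Type*} [LieRing g] [LieAlgebra ℂ g] [CommRing A] [Algebra ℂ A]
  [LieRing L] [LieAlgebra ℂ L] (S : LoopAffVir g A L)
  {V : Type*} [AddCommGroup V] [Module ℂ V] [LieRingModule L V] [LieModule ℂ L V]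

theorem lie_E_zero_E (n : ℤ) (x y : g) (a b : A) :
    ⁅S.E 0 x a, S.E n y b⁆ = S.E n ⁅x, y⁆ (a * b) := by
  rw [S.lie_EE, zero_add, Int.cast_zero, zero_mul, ite_self, zero_smul, add_zero]

theorem lie_D_zero_D (n : ℤ) (a b : A) : ⁅S.D 0 a, S.D n b⁆ = (n : ℂ) • S.D n (a * b) := by
  rw [S.lie_DD, zero_add, Int.cast_zero]
  simp

theorem lie_E_D (n m : ℤ) (x : g) (a b : A) :
    ⁅S.E n x a, S.D m b⁆ = -(n : ℂ) • S.E (n + m) x (b * a) := by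
  rw [← lie_skew, S.lie_DE, neg_smul]

theorem cartan_le_cartanA : S.cartan ≤ S.cartanA := by
  refine Submodule.span_le.mpr ?_
  rintro _ (⟨h, hh, rfl⟩ | rfl | rfl | rfl)
  · exact (S.eHA ⟨h, hh⟩ 1).2
  · exact (S.KA 1).2
  · exact (S.DA0 1).2
  · exact (S.CA 1).2

section HighestWeight

variable [FiniteDimensional ℂ g] [LieAlgebra.IsSimple ℂ g]

/-- A highest weight vector determines a grading of `𝔏(A)` by an element of `h̄` for which every
homogeneous element either lowers the degree or preserves the line of the highest weight vector. -/
theorem exists_degree {v : V} (hv : ∀ z ∈ S.plusSet, ⁅z, v⁆ = 0) :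
    ∃ e ∈ S.cartan, ∃ X : Set g, Submodule.span ℂ X = ⊤ ∧
      (∀ (n : ℤ), ∀ x ∈ X, (∀ a, ∃ k : ℕ, 0 < k ∧ |n| ≤ k ∧
          ⁅e, S.E n x a⁆ = -(k : ℂ) • S.E n x a) ∨
        (n = 0 ∧ x ∈ S.H) ∨ ∀ a, ⁅S.E n x a, v⁆ = 0) ∧
      ∀ n : ℤ, n < 0 → ∀ a, ∃ k : ℕ, 0 < k ∧ |n| ≤ k ∧ ⁅e, S.D n a⁆ = -(k : ℂ) • S.D n a := by
  let p : LieSubalgebra ℂ g :=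
    { carrier := {x | ∀ a, ⁅S.E 0 x a, v⁆ = 0}
      add_mem' := fun {x y} hx hy a => by
        rw [map_add, LinearMap.add_apply, add_lie, hx a, hy a, add_zero]
      zero_mem' := fun a => by rw [map_zero, LinearMap.zero_apply, zero_lie]
      smul_mem' := fun t x hx a => by
        rw [map_smul, LinearMap.smul_apply, smul_lie, hx a, smul_zero]
      lie_mem' := fun {x y} hx hy a => by
        rw [← one_mul a, ← S.lie_E_zero_E, lie_lie, hx 1, hy a, lie_zero, lie_zero, sub_zero] }
  have hp : ∀ α ∈ S.Δplus, ∀ x ∈ S.rootSp α, x ∈ p := fun α hα x hx a =>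
    hv _ (Set.mem_union_left _ (Set.mem_union_right _ ⟨α, hα, x, hx, a, rfl⟩))
  obtain ⟨h, hh, N, hN⟩ := S.exists_grading p hp
  have hD : S.D 0 1 ∈ S.cartan := S.d0.2
  have hE : S.E 0 h 1 ∈ S.cartan := (S.eH ⟨h, hh⟩).2
  refine ⟨((N : ℂ) + 1) • S.D 0 1 + S.E 0 h 1, add_mem (S.cartan.smul_mem _ hD) hE, _, hN, ?_, ?_⟩
  · rintro n x ⟨d, hdN, hdx, hx⟩
    have hdN' := abs_le.mp hdN
    have hlow : (n < 0 ∨ n = 0 ∧ d < 0) → ∀ a, ∃ k : ℕ, 0 < k ∧ |n| ≤ k ∧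
        ⁅((N : ℂ) + 1) • S.D 0 1 + S.E 0 h 1, S.E n x a⁆ = -(k : ℂ) • S.E n x a := by
      intro hn a
      have hn' : n ≤ 0 := by omega
      have h1 : (N : ℤ) * n ≤ 0 := mul_nonpos_of_nonneg_of_nonpos (by positivity) hn'
      have h2 : n < 0 → (N : ℤ) * n ≤ -N := fun h => by nlinarith
      have h3 : |n| ≤ -((N + 1) * n + d) := by
        rw [abs_of_nonpos hn', add_mul, one_mul]
        rcases hn with hn | hn
        · have := h2 hn; omega
        · omega
      obtain ⟨k, hk⟩ := Int.eq_ofNat_of_zero_le ((abs_nonneg n).trans h3)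
      refine ⟨k, ?_, hk ▸ h3, ?_⟩
      · rw [add_mul, one_mul] at hk
        rcases hn with hn | hn
        · have := h2 hn; omega
        · rw [hn.1] at hk; omega
      · have hk' : -(k : ℂ) = (N + 1) * n + d := by
          rw [← Int.cast_natCast k, ← hk]
          push_cast
          ring
        rw [hk', add_lie, smul_lie, S.lie_DE, S.lie_E_zero_E, one_mul, add_zero, hdx, map_smul,
          LinearMap.smul_apply, smul_smul, ← add_smul]
    rcases lt_trichotomy n 0 with hn | hn | hn
    · exact Or.inl (hlow (Or.inl hn))
    · rcases hx with hx | hx | hx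
      · exact Or.inr (Or.inl ⟨hn, hx⟩)
      · exact Or.inr (Or.inr fun a => hn ▸ hx a)
      · exact Or.inl (hlow (Or.inr ⟨hn, hx⟩))
    · exact Or.inr (Or.inr fun a => hv _ (Set.mem_union_left _ (Set.mem_union_left _
        ⟨n, hn, x, a, rfl⟩)))
  · intro n hn a
    obtain ⟨k, hk⟩ := Int.eq_ofNat_of_zero_le (Int.neg_pos.mpr hn).le
    refine ⟨(N + 1) * k, by positivity [show 0 < k by omega], ?_, ?_⟩
    · rw [abs_of_neg hn, hk]
      exact_mod_cast Nat.le_mul_of_pos_left k N.succ_pos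
    · have hk' : (n : ℂ) = -k := by
        rw [← Int.cast_natCast k, ← Int.cast_neg, ← hk, neg_neg]
      rw [add_lie, smul_lie, S.lie_D_zero_D, S.lie_E_D, one_mul, Int.cast_zero, neg_zero, zero_smul,
        add_zero, smul_smul, hk']
      push_cast
      rw [mul_neg]

end HighestWeight

end LoopAffVir

namespace LoopAffVir

open LieModule

variable {g A L : Type*} [LieRing g] [LieAlgebra ℂ g] [CommRing A] [Algebra ℂ A]
  [LieRing L] [LieAlgebra ℂ L] (S : LoopAffVir g A L)
  {V : Type*} [AddCommGroup V] [Module ℂ V] [LieRingModule L V]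

/-- Generators of `𝔏(A)` of negative degree `-k` for the adjoint action of `e`, involving only
`tⁿ` and `dₙ` with `|n| ≤ k`. -/
def loweringSet (e : L) : Set L :=
  {z | ∃ k : ℕ, 0 < k ∧ ⁅e, z⁆ = -(k : ℂ) • z ∧ ∃ n : ℤ, |n| ≤ k ∧
    ((∃ x a, z = S.E n x a) ∨ ∃ a, z = S.D n a)}

theorem E_mem_of_span_eq_top {X : Set g} (hX : Submodule.span ℂ X = ⊤) {N : Submodule ℂ L}
    {n : ℤ} {a : A} (h : ∀ x ∈ X, S.E n x a ∈ N) (x : g) : S.E n x a ∈ N := by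
  have hle : Submodule.span ℂ X ≤ N.comap ((S.E n).flip a) := Submodule.span_le.mpr h
  exact hle (hX ▸ Submodule.mem_top)

theorem span_loweringSet_union {v : V} (hv : ∀ z ∈ S.plusSet, ⁅z, v⁆ = 0)
    {ψ : Module.Dual ℂ S.cartanA} (hψ : ∀ h : S.cartanA, ⁅(h : L), v⁆ = ψ h • v)
    {e : L} {X : Set g} (hX : Submodule.span ℂ X = ⊤)
    (hE : ∀ n : ℤ, ∀ x ∈ X, (∀ a, ∃ k : ℕ, 0 < k ∧ |n| ≤ k ∧
          ⁅e, S.E n x a⁆ = -(k : ℂ) • S.E n x a) ∨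
        (n = 0 ∧ x ∈ S.H) ∨ ∀ a, ⁅S.E n x a, v⁆ = 0)
    (hD : ∀ n : ℤ, n < 0 → ∀ a, ∃ k : ℕ, 0 < k ∧ |n| ≤ k ∧ ⁅e, S.D n a⁆ = -(k : ℂ) • S.D n a) :
    Submodule.span ℂ (S.loweringSet e ∪ {z | ∃ s : ℂ, ⁅z, v⁆ = s • v}) = ⊤ := by
  rw [eq_top_iff, ← S.span_top, Submodule.span_le]
  rintro _ (((⟨n, x, a, rfl⟩ | ⟨n, a, rfl⟩) | ⟨a, rfl⟩) | ⟨a, rfl⟩)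
  · refine S.E_mem_of_span_eq_top hX (fun x hx => Submodule.subset_span ?_) x
    rcases hE n x hx with h | ⟨rfl, h⟩ | h
    · obtain ⟨k, hk, hnk, h⟩ := h a
      exact Or.inl ⟨k, hk, h, n, hnk, Or.inl ⟨x, a, rfl⟩⟩
    · exact Or.inr ⟨_, hψ (S.eHA ⟨x, h⟩ a)⟩
    · exact Or.inr ⟨0, by rw [h, zero_smul]⟩
  · apply Submodule.subset_span
    rcases lt_trichotomy n 0 with hn | rfl | hn
    · obtain ⟨k, hk, hnk, h⟩ := hD n hn a
      exact Or.inl ⟨k, hk, h, n, hnk, Or.inr ⟨a, rfl⟩⟩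
    · exact Or.inr ⟨_, hψ (S.DA0 a)⟩
    · exact Or.inr ⟨0, by rw [hv _ (Or.inr ⟨n, hn, a, rfl⟩), zero_smul]⟩
  · exact Submodule.subset_span (Or.inr ⟨_, hψ (S.KA a)⟩)
  · exact Submodule.subset_span (Or.inr ⟨_, hψ (S.CA a)⟩)

/-- Generators of `𝔏 ⊗ I`. -/
def idealSet (X : Set g) (I : Ideal A) : Set L :=
  {z | ∃ a ∈ I, (∃ n, ∃ x ∈ X, z = S.E n x a) ∨ (∃ n, z = S.D n a) ∨ z = S.K a ∨ z = S.C a}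

theorem mem_span_idealSet {X : Set g} (hX : Submodule.span ℂ X = ⊤) {I : Ideal A} {a : A}
    (ha : a ∈ I) :
    (∀ n x, S.E n x a ∈ Submodule.span ℂ (S.idealSet X I)) ∧
    (∀ n, S.D n a ∈ Submodule.span ℂ (S.idealSet X I)) ∧
    S.K a ∈ Submodule.span ℂ (S.idealSet X I) ∧ S.C a ∈ Submodule.span ℂ (S.idealSet X I) :=
  ⟨fun n => S.E_mem_of_span_eq_top hX fun x hx =>
      Submodule.subset_span ⟨a, ha, Or.inl ⟨n, x, hx, rfl⟩⟩,
    fun n => Submodule.subset_span ⟨a, ha, Or.inr (Or.inl ⟨n, rfl⟩)⟩,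
    Submodule.subset_span ⟨a, ha, Or.inr (Or.inr (Or.inl rfl))⟩,
    Submodule.subset_span ⟨a, ha, Or.inr (Or.inr (Or.inr rfl))⟩⟩

theorem lie_mem_span_idealSet {X : Set g} (hX : Submodule.span ℂ X = ⊤) (I : Ideal A) (y z : L)
    (hz : z ∈ Submodule.span ℂ (S.idealSet X I)) :
    ⁅y, z⁆ ∈ Submodule.span ℂ (S.idealSet X I) := by
  set N := Submodule.span ℂ (S.idealSet X I)
  have hmem : ∀ b, ∀ a ∈ I, (∀ n x, S.E n x (b * a) ∈ N) ∧ (∀ n, S.D n (b * a) ∈ N) ∧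
      S.K (b * a) ∈ N ∧ S.C (b * a) ∈ N := fun b a ha =>
    S.mem_span_idealSet hX (I.mul_mem_left b ha)
  have hy : y ∈ Submodule.span ℂ _ := S.span_top ▸ Submodule.mem_top
  induction hz using Submodule.span_induction with
  | mem z hz =>
    induction hy using Submodule.span_induction with
    | mem y hy =>
      obtain ⟨a, ha, hz⟩ := hz
      rcases hz with ⟨m, w, -, rfl⟩ | ⟨m, rfl⟩ | rfl | rfl
      · rcases hy with ((⟨n, x, b, rfl⟩ | ⟨n, b, rfl⟩) | ⟨b, rfl⟩) | ⟨b, rfl⟩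
        · rw [S.lie_EE]
          exact add_mem ((hmem b a ha).1 _ _) (N.smul_mem _ (hmem b a ha).2.2.1)
        · rw [S.lie_DE]
          exact N.smul_mem _ ((hmem b a ha).1 _ _)
        · rw [S.K_central]; exact zero_mem _
        · rw [S.C_central]; exact zero_mem _
      · rcases hy with ((⟨n, x, b, rfl⟩ | ⟨n, b, rfl⟩) | ⟨b, rfl⟩) | ⟨b, rfl⟩
        · rw [S.lie_E_D, mul_comm]
          exact N.smul_mem _ ((hmem b a ha).1 _ _)
        · rw [S.lie_DD]
          exact add_mem (N.smul_mem _ ((hmem b a ha).2.1 _)) (N.smul_mem _ (hmem b a ha).2.2.2)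
        · rw [S.K_central]; exact zero_mem _
        · rw [S.C_central]; exact zero_mem _
      · rw [← lie_skew, S.K_central, neg_zero]; exact zero_mem _
      · rw [← lie_skew, S.C_central, neg_zero]; exact zero_mem _
    | zero => rw [zero_lie]; exact zero_mem _
    | add a b _ _ ha hb => rw [add_lie]; exact add_mem ha hb
    | smul t a _ ha => rw [smul_lie]; exact N.smul_mem t ha
  | zero => rw [lie_zero]; exact zero_mem _
  | add a b _ _ ha hb => rw [lie_add]; exact add_mem ha hb
  | smul t a _ ha => rw [lie_smul]; exact N.smul_mem t ha

/-- The functional `ψ` vanishes on `h̄ ⊗ I`. -/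
def VanishesOn (ψ : Module.Dual ℂ S.cartanA) (I : Ideal A) : Prop :=
  ∀ (h : S.H) (a : A), a ∈ I →
    ψ (S.eHA h a) = 0 ∧ ψ (S.KA a) = 0 ∧ ψ (S.DA0 a) = 0 ∧ ψ (S.CA a) = 0

theorem finiteDimensional_range_of_le_ker {I : Ideal A} (hI : IsCofiniteIdeal I) {W : Type*}
    [AddCommGroup W] [Module ℂ W] (f : A →ₗ[ℂ] W) (hf : ∀ a ∈ I, f a = 0) :
    FiniteDimensional ℂ (LinearMap.range f) := by
  have hI' : FiniteDimensional ℂ (A ⧸ I) := hI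
  have hle : I.restrictScalars ℂ ≤ LinearMap.ker f := hf
  have : FiniteDimensional ℂ (A ⧸ I.restrictScalars ℂ) :=
    (Submodule.Quotient.restrictScalarsEquiv ℂ I).symm.finiteDimensional
  rw [← Submodule.range_liftQ (I.restrictScalars ℂ) f hle]
  infer_instance

section HighestWeight

variable [LieModule ℂ L V] [FiniteDimensional ℂ g] [LieAlgebra.IsSimple ℂ g]

theorem annihilates_of_vanishesOn {ψ : Module.Dual ℂ S.cartanA} (hHW : S.IsHWModule V ψ)
    (hIrr : IsSimpleOrder (LieSubmodule ℂ L V)) {I : Ideal A} (hI : S.VanishesOn ψ I) :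
    S.Annihilates V I := by
  obtain ⟨v, hv0, hv, hψ, -⟩ := hHW
  obtain ⟨e, he, X, hX, hE, hD⟩ := S.exists_degree hv
  have hspan := S.span_loweringSet_union hv hψ hX hE hD
  have hker := lie_eq_zero_of_lowers_degree hspan hv0 (hψ ⟨e, S.cartan_le_cartanA he⟩)
    (fun z hz => hz) (fun y ⟨k, hk, h, _⟩ => ⟨k, hk, h⟩) hIrr (S.lie_mem_span_idealSet hX I) (by
      rintro _ ⟨a, ha, ⟨n, x, hx, rfl⟩ | ⟨n, rfl⟩ | rfl | rfl⟩
      · rcases hE n x hx with h | ⟨rfl, h⟩ | h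
        · obtain ⟨k, hk, -, h⟩ := h a
          exact Or.inr ⟨k, hk, h⟩
        · exact Or.inl ((hψ (S.eHA ⟨x, h⟩ a)).trans (by rw [(hI ⟨x, h⟩ a ha).1, zero_smul]))
        · exact Or.inl (h a)
      · rcases lt_trichotomy n 0 with hn | rfl | hn
        · obtain ⟨k, hk, -, h⟩ := hD n hn a
          exact Or.inr ⟨k, hk, h⟩
        · exact Or.inl ((hψ (S.DA0 a)).trans (by rw [(hI 0 a ha).2.2.1, zero_smul]))
        · exact Or.inl (hv _ (Or.inr ⟨n, hn, a, rfl⟩))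
      · exact Or.inl ((hψ (S.KA a)).trans (by rw [(hI 0 a ha).2.1, zero_smul]))
      · exact Or.inl ((hψ (S.CA a)).trans (by rw [(hI 0 a ha).2.2.2, zero_smul])))
  intro a ha
  obtain ⟨h1, h2, h3, h4⟩ := S.mem_span_idealSet hX ha
  exact ⟨fun n x => hker _ (h1 n x), fun n => hker _ (h2 n), hker _ h3, hker _ h4⟩

theorem hasFinDimWeightSpaces_of_vanishesOn {ψ : Module.Dual ℂ S.cartanA}
    (hHW : S.IsHWModule V ψ) (hIrr : IsSimpleOrder (LieSubmodule ℂ L V)) {I : Ideal A}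
    (hcof : IsCofiniteIdeal I) (hI : S.VanishesOn ψ I) : S.HasFinDimWeightSpaces V := by
  have hann := S.annihilates_of_vanishesOn hHW hIrr hI
  obtain ⟨v, hv0, hv, hψ, hgen⟩ := hHW
  obtain ⟨e, he, X, hX, hE, hD⟩ := S.exists_degree hv
  have hspan := S.span_loweringSet_union hv hψ hX hE hD
  let ρ : L →ₗ[ℂ] Module.End ℂ V := (toEnd ℂ L V : L →ₗ[ℂ] Module.End ℂ V)
  let bas := Module.finBasis ℂ g
  let T : ℕ → Submodule ℂ (Module.End ℂ V) := fun k => ⨆ n : {n : ℤ // n ∈ Finset.Icc (-k : ℤ) k},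
    (⨆ i, LinearMap.range (ρ ∘ₗ S.E n (bas i))) ⊔ LinearMap.range (ρ ∘ₗ S.D n)
  have hTfin : ∀ k, FiniteDimensional ℂ (T k) := by
    intro k
    have h1 : ∀ n i, FiniteDimensional ℂ (LinearMap.range (ρ ∘ₗ S.E n (bas i))) := fun n i =>
      finiteDimensional_range_of_le_ker hcof _ fun a ha => LinearMap.ext ((hann a ha).1 n (bas i))
    have h2 : ∀ n, FiniteDimensional ℂ (LinearMap.range (ρ ∘ₗ S.D n)) := fun n =>
      finiteDimensional_range_of_le_ker hcof _ fun a ha => LinearMap.ext ((hann a ha).2.1 n)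
    exact Submodule.finiteDimensional_iSup _
  have hT : Monotone T := fun k l hkl => iSup_le fun n => by
    have hn := Finset.mem_Icc.mp n.2
    exact le_iSup (fun n : {n : ℤ // n ∈ Finset.Icc (-l : ℤ) l} =>
      (⨆ i, LinearMap.range (ρ ∘ₗ S.E n (bas i))) ⊔ LinearMap.range (ρ ∘ₗ S.D n))
      ⟨n, Finset.mem_Icc.mpr (by omega)⟩
  intro χ
  have hfin := finiteDimensional_eigenspace_toEnd hspan (hψ ⟨e, S.cartan_le_cartanA he⟩)
    (fun z hz => hz) hgen T hT (by
      rintro _ ⟨k, hk, h, n, hnk, hz⟩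
      refine ⟨k, hk, h, Submodule.mem_iSup_of_mem ⟨n, Finset.mem_Icc.mpr (abs_le.mp hnk)⟩ ?_⟩
      rcases hz with ⟨x, a, rfl⟩ | ⟨a, rfl⟩
      · refine Submodule.mem_sup_left ?_
        have := S.E_mem_of_span_eq_top (N := Submodule.comap ρ
          (⨆ i, LinearMap.range (ρ ∘ₗ S.E n (bas i)))) (n := n) (a := a) bas.span_eq (by
            rintro _ ⟨i, rfl⟩
            exact Submodule.mem_iSup_of_mem i ⟨a, rfl⟩) x
        exact this
      · exact Submodule.mem_sup_right ⟨a, rfl⟩) (χ ⟨e, he⟩)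
  refine Submodule.finiteDimensional_of_le (S₂ := (toEnd ℂ L V e).eigenspace (χ ⟨e, he⟩)) ?_
  intro w hw
  rw [Module.End.mem_eigenspace_iff]
  exact hw ⟨e, he⟩

end HighestWeight

end LoopAffVir

theorem isCofiniteIdeal_iff_cofg {A : Type*} [CommRing A] [Algebra ℂ A] {I : Ideal A} :
    IsCofiniteIdeal I ↔ (I.restrictScalars ℂ).CoFG :=
  Module.Finite.equiv_iff (Submodule.Quotient.restrictScalarsEquiv ℂ I).symm

namespace LoopAffVir

variable {g A L : Type*} [LieRing g] [LieAlgebra ℂ g] [CommRing A] [Algebra ℂ A]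
  [LieRing L] [LieAlgebra ℂ L] (S : LoopAffVir g A L)
  {V : Type*} [AddCommGroup V] [Module ℂ V] [LieRingModule L V] [LieModule ℂ L V]

theorem finiteDimensional_of_hasFinDimWeightSpaces (hfd : S.HasFinDimWeightSpaces V)
    {X : Submodule ℂ V} (hX : ∀ z ∈ S.cartan, ∃ s : ℂ, ∀ x ∈ X, ⁅z, x⁆ = s • x) :
    FiniteDimensional ℂ X := by
  by_cases hbot : X = ⊥
  · rw [hbot]; infer_instance
  obtain ⟨x₀, hx₀, hne⟩ := Submodule.exists_mem_ne_zero_of_ne_bot hbot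
  choose s hs using fun z : S.cartan => hX z z.2
  let χ : Module.Dual ℂ S.cartan :=
    { toFun := s
      map_add' := fun y z => smul_left_injective ℂ hne (by
        simp only [add_smul, ← hs _ x₀ hx₀, Submodule.coe_add, add_lie])
      map_smul' := fun t z => smul_left_injective ℂ hne (by
        simp only [RingHom.id_apply, smul_eq_mul, mul_smul, ← hs _ x₀ hx₀, Submodule.coe_smul,
          smul_lie]) }
  have := hfd χ
  exact Submodule.finiteDimensional_of_le (S₂ := S.wtSpace V χ) fun x hx z => hs z x hx

theorem exists_cofinite_lie_eq_zero (hfd : S.HasFinDimWeightSpaces V) {v : V}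
    {ψ : Module.Dual ℂ S.cartanA} (hψ : ∀ h : S.cartanA, ⁅(h : L), v⁆ = ψ h • v)
    {φ : A →ₗ[ℂ] L} (hφ : ∀ z ∈ S.cartanSet, ∃ s : ℂ, ∀ a, ⁅z, φ a⁆ = s • φ a) {r : ℂ}
    (hr : r ≠ 0) (hD : ∀ a b, ⁅S.D 0 b, φ a⁆ = r • φ (b * a)) :
    ∃ I : Ideal A, IsCofiniteIdeal I ∧ ∀ a ∈ I, ⁅φ a, v⁆ = 0 := by
  let f : A →ₗ[ℂ] V := (LieModule.toEnd ℂ L V : L →ₗ[ℂ] Module.End ℂ V).flip v ∘ₗ φ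
  have hf : ∀ a, f a = ⁅φ a, v⁆ := fun a => rfl
  let I : Ideal A :=
    { LinearMap.ker f with
      smul_mem' := fun b a ha => by
        have ha' : ⁅φ a, v⁆ = 0 := ha
        have h := leibniz_lie (S.D 0 b) (φ a) v
        have hb : ⁅S.D 0 b, v⁆ = ψ (S.DA0 b) • v := hψ (S.DA0 b)
        rw [ha', lie_zero, hD, hb, lie_smul, ha', smul_zero, add_zero, smul_lie] at h
        exact (smul_eq_zero.mp h.symm).resolve_left hr }
  have hφ' : ∀ z ∈ S.cartan, ∃ s : ℂ, ∀ a, ⁅z, φ a⁆ = s • φ a := by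
    intro z hz
    induction hz using Submodule.span_induction with
    | mem z hz => exact hφ z hz
    | zero => exact ⟨0, fun a => by rw [zero_lie, zero_smul]⟩
    | add y z _ _ hy hz =>
      obtain ⟨s, hs⟩ := hy
      obtain ⟨t, ht⟩ := hz
      exact ⟨s + t, fun a => by rw [add_lie, hs, ht, add_smul]⟩
    | smul t z _ hz =>
      obtain ⟨s, hs⟩ := hz
      exact ⟨t * s, fun a => by rw [smul_lie, hs, mul_smul]⟩
  refine ⟨I, isCofiniteIdeal_iff_cofg.mpr ?_, fun a ha => ha⟩
  have hfin : FiniteDimensional ℂ (LinearMap.range f) := by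
    refine S.finiteDimensional_of_hasFinDimWeightSpaces hfd fun z hz => ?_
    obtain ⟨s, hs⟩ := hφ' z hz
    refine ⟨s + ψ ⟨z, S.cartan_le_cartanA hz⟩, ?_⟩
    rintro _ ⟨a, rfl⟩
    have hz' : ⁅z, v⁆ = ψ ⟨z, S.cartan_le_cartanA hz⟩ • v := hψ ⟨z, S.cartan_le_cartanA hz⟩
    rw [hf, leibniz_lie, hs, hz', smul_lie, lie_smul, add_smul]
  exact Submodule.range_fg_iff_ker_cofg.mp (Module.Finite.iff_fg.mp hfin)

theorem exists_cofinite_lie_D_eq_zero (hfd : S.HasFinDimWeightSpaces V) {v : V}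
    {ψ : Module.Dual ℂ S.cartanA} (hψ : ∀ h : S.cartanA, ⁅(h : L), v⁆ = ψ h • v)
    {n : ℤ} (hn : n ≠ 0) :
    ∃ I : Ideal A, IsCofiniteIdeal I ∧ ∀ a ∈ I, ⁅S.D n a, v⁆ = 0 := by
  refine S.exists_cofinite_lie_eq_zero hfd hψ (φ := S.D n) ?_ (Int.cast_ne_zero.mpr hn)
    fun a b => S.lie_D_zero_D n b a
  rintro _ (⟨h, hh, rfl⟩ | rfl | rfl | rfl)
  · exact ⟨0, fun a => by rw [S.lie_E_D, Int.cast_zero, neg_zero, zero_smul, zero_smul]⟩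
  · exact ⟨0, fun a => by rw [S.K_central, zero_smul]⟩
  · exact ⟨n, fun a => by rw [S.lie_D_zero_D, one_mul]⟩
  · exact ⟨0, fun a => by rw [S.C_central, zero_smul]⟩

section HighestWeight

variable [FiniteDimensional ℂ g] [LieAlgebra.IsSimple ℂ g]

theorem exists_cofinite_lie_E_eq_zero (hfd : S.HasFinDimWeightSpaces V) {v : V}
    {ψ : Module.Dual ℂ S.cartanA} (hψ : ∀ h : S.cartanA, ⁅(h : L), v⁆ = ψ h • v)
    {n : ℤ} (hn : n ≠ 0) (h : S.H) :
    ∃ I : Ideal A, IsCofiniteIdeal I ∧ ∀ a ∈ I, ⁅S.E n h a, v⁆ = 0 := by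
  have := S.isCartan
  refine S.exists_cofinite_lie_eq_zero hfd hψ (φ := S.E n h) ?_ (Int.cast_ne_zero.mpr hn)
    fun a b => by rw [S.lie_DE, add_zero]
  rintro _ (⟨h', hh', rfl⟩ | rfl | rfl | rfl)
  · have hab : ⁅h', (h : g)⁆ = 0 := congrArg Subtype.val (trivial_lie_zero S.H S.H ⟨h', hh'⟩ h)
    exact ⟨0, fun a => by
      rw [S.lie_E_zero_E, hab, map_zero, LinearMap.zero_apply, zero_smul]⟩
  · exact ⟨0, fun a => by rw [S.K_central, zero_smul]⟩
  · exact ⟨n, fun a => by rw [S.lie_DE, one_mul, add_zero]⟩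
  · exact ⟨0, fun a => by rw [S.C_central, zero_smul]⟩

theorem exists_cofinite_vanishesOn {ψ : Module.Dual ℂ S.cartanA} (hHW : S.IsHWModule V ψ)
    (hfd : S.HasFinDimWeightSpaces V) : ∃ I : Ideal A, IsCofiniteIdeal I ∧ S.VanishesOn ψ I := by
  obtain ⟨v, hv0, hv, hψ, -⟩ := hHW
  let bas := Module.finBasis ℂ S.H
  obtain ⟨I₁, hI₁, h₁⟩ := S.exists_cofinite_lie_D_eq_zero hfd hψ (n := -1) (by decide)
  obtain ⟨I₂, hI₂, h₂⟩ := S.exists_cofinite_lie_D_eq_zero hfd hψ (n := -2) (by decide)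
  choose J hJ hJE using fun i =>
    S.exists_cofinite_lie_E_eq_zero hfd hψ (n := -1) (by decide) (bas i)
  refine ⟨I₁ ⊓ I₂ ⊓ ⨅ i, J i, ?_, ?_⟩
  · rw [isCofiniteIdeal_iff_cofg] at hI₁ hI₂ ⊢
    have hJ' : (⨅ i, (J i).restrictScalars ℂ).CoFG :=
      Submodule.CoFG.sInf_of_finite (Set.finite_range _) (by
        rintro _ ⟨i, rfl⟩
        exact isCofiniteIdeal_iff_cofg.mp (hJ i))
    refine Submodule.CoFG.of_le ?_ ((hI₁.inf hI₂).inf hJ')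
    rintro a ⟨⟨ha₁, ha₂⟩, ha₃⟩
    exact ⟨⟨ha₁, ha₂⟩, Submodule.mem_iInf _ |>.mpr fun i => Submodule.mem_iInf _ |>.mp ha₃ i⟩
  · rintro h a ⟨⟨ha₁, ha₂⟩, ha₃⟩
    have hlie : ∀ z ∈ S.plusSet, ∀ y : L, ⁅y, v⁆ = 0 → ⁅⁅z, y⁆, v⁆ = 0 := fun z hz y hy => by
      rw [lie_lie, hy, hv z hz, lie_zero, lie_zero, sub_zero]
    have hDplus : ∀ n : ℤ, 0 < n → S.D n 1 ∈ S.plusSet := fun n hn => Or.inr ⟨n, hn, 1, rfl⟩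
    have hψ0 : ∀ z : S.cartanA, ⁅(z : L), v⁆ = 0 → ψ z = 0 := fun z hz => by
      rw [hψ] at hz
      exact (smul_eq_zero.mp hz).resolve_right hv0
    have hE : ∀ x : S.H, ⁅S.E (-1) x a, v⁆ = 0 := by
      intro x
      let F : S.H →ₗ[ℂ] V := (LieModule.toEnd ℂ L V : L →ₗ[ℂ] Module.End ℂ V).flip v ∘ₗ
        (S.E (-1)).flip a ∘ₗ S.H.toSubmodule.subtype
      have hF : F = 0 := bas.ext fun i => hJE i a (Submodule.mem_iInf _ |>.mp ha₃ i)
      exact LinearMap.congr_fun hF x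
    have hD0 : ⁅S.D 0 a, v⁆ = 0 := by
      have := hlie _ (hDplus 1 one_pos) _ (h₁ a ha₁)
      rw [S.lie_DD, one_mul] at this
      norm_num at this
      exact this
    have hE0 : ∀ x : S.H, ⁅S.E 0 x a, v⁆ = 0 := by
      intro x
      have := hlie _ (hDplus 1 one_pos) _ (hE x)
      rw [S.lie_DE, one_mul] at this
      simpa using this
    refine ⟨hψ0 _ (hE0 h), hψ0 _ (?_ : ⁅S.K a, v⁆ = 0), hψ0 _ hD0, hψ0 _ (?_ : ⁅S.C a, v⁆ = 0)⟩
    · obtain ⟨x, hx, y, hy, hxy⟩ := S.exists_form_ne_zero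
      have := hlie (S.E 1 y 1) (Or.inl (Or.inl ⟨1, one_pos, y, 1, rfl⟩)) _ (hE ⟨x, hx⟩)
      rw [S.lie_EE, one_mul, add_lie] at this
      have hyx := hE0 ⟨⁅y, x⁆, S.H.lie_mem hy hx⟩
      simpa [hyx, hxy] using this
    · have := hlie _ (hDplus 2 two_pos) _ (h₂ a ha₂)
      rw [S.lie_DD, one_mul, add_lie] at this
      norm_num [hD0] at this
      exact this

end HighestWeight

end LoopAffVir

/-- The irreducible highest weight module `V(ψ)` has finite dimensional
weight spaces with respect to `h̄` iff `ψ` factors through `h̄ ⊗ I` for a cofinite ideal `I`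
of `A`; and in that case `(𝔏 ⊗ I) ⬝ V(ψ) = 0`. -/
theorem statement1
    {g A L : Type*} [LieRing g] [LieAlgebra ℂ g] [FiniteDimensional ℂ g]
    [LieAlgebra.IsSimple ℂ g]
    [CommRing A] [Algebra ℂ A] [Algebra.FiniteType ℂ A]
    [LieRing L] [LieAlgebra ℂ L]
    (S : LoopAffVir g A L)
    (V : Type*) [AddCommGroup V] [Module ℂ V] [LieRingModule L V] [LieModule ℂ L V]
    (ψ : Module.Dual ℂ S.cartanA)
    (hWM : S.IsWeightModule V)
    (hHW : S.IsHWModule V ψ)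
    (hIrr : IsSimpleOrder (LieSubmodule ℂ L V))
    :
    (S.HasFinDimWeightSpaces V ↔
      ∃ I : Ideal A, IsCofiniteIdeal I ∧
        ∀ (h : S.H) (a : A), a ∈ I →
          ψ (S.eHA h a) = 0 ∧ ψ (S.KA a) = 0 ∧ ψ (S.DA0 a) = 0 ∧ ψ (S.CA a) = 0) ∧
    (S.HasFinDimWeightSpaces V →
      ∀ I : Ideal A, IsCofiniteIdeal I →
        (∀ (h : S.H) (a : A), a ∈ I →
          ψ (S.eHA h a) = 0 ∧ ψ (S.KA a) = 0 ∧ ψ (S.DA0 a) = 0 ∧ ψ (S.CA a) = 0) →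
        S.Annihilates V I) := by
  refine ⟨⟨S.exists_cofinite_vanishesOn hHW, ?_⟩, ?_⟩
  · rintro ⟨I, hcof, hI⟩
    exact S.hasFinDimWeightSpaces_of_vanishesOn hHW hIrr hcof hI
  · exact fun _ I _ hI => S.annihilates_of_vanishesOn hHW hIrr hI
end

section
/- Let ψ: h̄⊗A → ℂ be linear and suppose the irreducible highest weight module V(ψ) is an integrable 𝔏(A)-module. Then there exists a cofinite ideal I of A such that ψ(d₀⊗I) = 0, ψ(C⊗I) = 0, and ψ((h̊ ⊕ ℂK)⊗√I) = 0, where √I is the radical of I. -/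
section CurrentSl2

set_option linter.unusedSectionVars false

variable {A L V : Type*} [CommRing A] [LieRing L] [LieAlgebra ℂ L]
  [AddCommGroup V] [Module ℂ V] [LieRingModule L V] [LieModule ℂ L V]

/-- The span of all products of `k` lowering operators `f x`, `x ∈ A`, applied to `v`. -/
def loweringFiltration (f : A → L) (v : V) : ℕ → Submodule ℂ V
  | 0 => Submodule.span ℂ {v}
  | k + 1 => Submodule.span ℂ {w | ∃ x, ∃ u ∈ loweringFiltration f v k, w = ⁅f x, u⁆}

/-- The span of all products of `k` lowering operators applied to `v`, at least one of which
is of the form `f (s * x)`. -/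
def loweringFiltrationMul (f : A → L) (v : V) (s : A) : ℕ → Submodule ℂ V
  | 0 => ⊥
  | k + 1 => Submodule.span ℂ
      ({w | ∃ x, ∃ u ∈ loweringFiltration f v k, w = ⁅f (s * x), u⁆} ∪
        {w | ∃ x, ∃ u ∈ loweringFiltrationMul f v s k, w = ⁅f x, u⁆})

lemma lie_mem_of_forall_mem_span {T : Set V} {W : Submodule ℂ V} {z : L}
    (hT : ∀ w ∈ T, ⁅z, w⁆ ∈ W) {w : V} (hw : w ∈ Submodule.span ℂ T) : ⁅z, w⁆ ∈ W := by
  induction hw using Submodule.span_induction with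
  | mem w hw => exact hT w hw
  | zero => simp
  | add u w _ _ hu hw => rw [lie_add]; exact W.add_mem hu hw
  | smul t w _ hw => rw [lie_smul]; exact W.smul_mem t hw

lemma lie_lowering_mem (f : A → L) (v : V) {k : ℕ} (x : A) {u : V}
    (hu : u ∈ loweringFiltration f v k) : ⁅f x, u⁆ ∈ loweringFiltration f v (k + 1) :=
  Submodule.subset_span ⟨x, u, hu, rfl⟩

lemma lie_lowering_mul_mem (f : A → L) (v : V) (s : A) {k : ℕ} (x : A) {u : V}
    (hu : u ∈ loweringFiltration f v k) :
    ⁅f (s * x), u⁆ ∈ loweringFiltrationMul f v s (k + 1) :=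
  Submodule.subset_span (Or.inl ⟨x, u, hu, rfl⟩)

lemma lie_lowering_mem_mul (f : A → L) (v : V) (s : A) {k : ℕ} (x : A) {u : V}
    (hu : u ∈ loweringFiltrationMul f v s k) :
    ⁅f x, u⁆ ∈ loweringFiltrationMul f v s (k + 1) :=
  Submodule.subset_span (Or.inr ⟨x, u, hu, rfl⟩)

variable {e f h : A → L} {κ : ℂ} {v : V} {s : A}

lemma cartan_lowering_mem (hhf : ∀ a b, ⁅h a, f b⁆ = κ • f (a * b))
    (hhv : ∀ a, ∃ c : ℂ, ⁅h a, v⁆ = c • v) (a : A) (k : ℕ) :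
    ∀ w ∈ loweringFiltration f v k, ⁅h a, w⁆ ∈ loweringFiltration f v k := by
  induction k with
  | zero =>
    refine fun w ↦ lie_mem_of_forall_mem_span ?_
    rintro _ rfl
    obtain ⟨c, hc⟩ := hhv a
    rw [hc]
    exact Submodule.smul_mem _ _ (Submodule.mem_span_singleton_self _)
  | succ k ih =>
    refine fun w ↦ lie_mem_of_forall_mem_span ?_
    rintro _ ⟨x, u, hu, rfl⟩
    rw [leibniz_lie, hhf, smul_lie]
    exact add_mem (Submodule.smul_mem _ _ (lie_lowering_mem f v _ hu))
      (lie_lowering_mem f v _ (ih u hu))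

lemma cartan_lowering_mul_mem (hhf : ∀ a b, ⁅h a, f b⁆ = κ • f (a * b))
    (hs : ∀ b, ⁅h (s * b), v⁆ = 0) (a : A) (k : ℕ) :
    ∀ w ∈ loweringFiltration f v k, ⁅h (s * a), w⁆ ∈ loweringFiltrationMul f v s k := by
  induction k with
  | zero =>
    refine fun w ↦ lie_mem_of_forall_mem_span ?_
    rintro _ rfl
    rw [hs]
    exact zero_mem _
  | succ k ih =>
    refine fun w ↦ lie_mem_of_forall_mem_span ?_
    rintro _ ⟨x, u, hu, rfl⟩
    rw [leibniz_lie, hhf, smul_lie, mul_assoc]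
    exact add_mem (Submodule.smul_mem _ _ (lie_lowering_mul_mem f v s _ hu))
      (lie_lowering_mem_mul f v s _ (ih u hu))

lemma cartan_lowering_mem_mul (hhf : ∀ a b, ⁅h a, f b⁆ = κ • f (a * b))
    (hhv : ∀ a, ∃ c : ℂ, ⁅h a, v⁆ = c • v) (a : A) (k : ℕ) :
    ∀ w ∈ loweringFiltrationMul f v s k, ⁅h a, w⁆ ∈ loweringFiltrationMul f v s k := by
  induction k with
  | zero =>
    intro w hw
    obtain rfl : w = 0 := hw
    simp
  | succ k ih =>
    refine fun w ↦ lie_mem_of_forall_mem_span ?_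
    rintro _ (⟨x, u, hu, rfl⟩ | ⟨x, u, hu, rfl⟩)
    · rw [leibniz_lie, hhf, smul_lie, mul_left_comm]
      exact add_mem (Submodule.smul_mem _ _ (lie_lowering_mul_mem f v s _ hu))
        (lie_lowering_mul_mem f v s _ (cartan_lowering_mem hhf hhv a k u hu))
    · rw [leibniz_lie, hhf, smul_lie]
      exact add_mem (Submodule.smul_mem _ _ (lie_lowering_mem_mul f v s _ hu))
        (lie_lowering_mem_mul f v s _ (ih u hu))

lemma raising_lowering_zero (hev : ∀ a, ⁅e a, v⁆ = 0) (b : A) :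
    ∀ w ∈ loweringFiltration f v 0, ⁅e b, w⁆ = 0 := by
  intro w hw
  obtain ⟨c, rfl⟩ := Submodule.mem_span_singleton.1 hw
  rw [lie_smul, hev, smul_zero]

lemma raising_lowering_mem (hef : ∀ a b, ⁅e a, f b⁆ = h (a * b))
    (hhf : ∀ a b, ⁅h a, f b⁆ = κ • f (a * b)) (hev : ∀ a, ⁅e a, v⁆ = 0)
    (hhv : ∀ a, ∃ c : ℂ, ⁅h a, v⁆ = c • v) (b : A) (k : ℕ) :
    ∀ w ∈ loweringFiltration f v (k + 1), ⁅e b, w⁆ ∈ loweringFiltration f v k := by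
  induction k with
  | zero =>
    refine fun w ↦ lie_mem_of_forall_mem_span ?_
    rintro _ ⟨x, u, hu, rfl⟩
    rw [leibniz_lie, hef, raising_lowering_zero hev b u hu, lie_zero, add_zero]
    exact cartan_lowering_mem hhf hhv _ _ u hu
  | succ k ih =>
    refine fun w ↦ lie_mem_of_forall_mem_span ?_
    rintro _ ⟨x, u, hu, rfl⟩
    rw [leibniz_lie, hef]
    exact add_mem (cartan_lowering_mem hhf hhv _ _ u hu) (lie_lowering_mem f v _ (ih u hu))

lemma raising_lowering_mem_mul (hef : ∀ a b, ⁅e a, f b⁆ = h (a * b))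
    (hhf : ∀ a b, ⁅h a, f b⁆ = κ • f (a * b)) (hev : ∀ a, ⁅e a, v⁆ = 0)
    (hhv : ∀ a, ∃ c : ℂ, ⁅h a, v⁆ = c • v) (hs : ∀ b, ⁅h (s * b), v⁆ = 0) (b : A) (k : ℕ) :
    ∀ w ∈ loweringFiltrationMul f v s (k + 1), ⁅e b, w⁆ ∈ loweringFiltrationMul f v s k := by
  induction k with
  | zero =>
    refine fun w ↦ lie_mem_of_forall_mem_span ?_
    rintro _ (⟨x, u, hu, rfl⟩ | ⟨x, u, hu, rfl⟩)
    · rw [leibniz_lie, hef, mul_left_comm, raising_lowering_zero hev b u hu, lie_zero, add_zero]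
      exact cartan_lowering_mul_mem hhf hs _ _ u hu
    · obtain rfl : u = 0 := hu
      simp
  | succ k ih =>
    refine fun w ↦ lie_mem_of_forall_mem_span ?_
    rintro _ (⟨x, u, hu, rfl⟩ | ⟨x, u, hu, rfl⟩)
    · rw [leibniz_lie, hef, mul_left_comm]
      exact add_mem (cartan_lowering_mul_mem hhf hs _ _ u hu)
        (lie_lowering_mul_mem f v s _ (raising_lowering_mem hef hhf hev hhv b k u hu))
    · rw [leibniz_lie, hef]
      exact add_mem (cartan_lowering_mem_mul hhf hhv _ _ u hu)
        (lie_lowering_mem_mul f v s _ (ih u hu))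

lemma toEnd_pow_succ_apply (z : L) (n : ℕ) (v : V) :
    (LieModule.toEnd ℂ L V z ^ (n + 1)) v = ⁅z, (LieModule.toEnd ℂ L V z ^ n) v⁆ := by
  rw [pow_succ', Module.End.mul_apply, LieModule.toEnd_apply_apply]

lemma lowering_pow_mem (f : A → L) (v : V) (c : A) (n : ℕ) :
    (LieModule.toEnd ℂ L V (f c) ^ n) v ∈ loweringFiltration f v n := by
  induction n with
  | zero => exact Submodule.mem_span_singleton_self _
  | succ n ih =>
    rw [toEnd_pow_succ_apply]
    exact lie_lowering_mem f v c ih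

lemma cartan_lowering_pow_sub_mem (hhf : ∀ a b, ⁅h a, f b⁆ = κ • f (a * b)) {b c : A} {p : ℂ}
    (hp : ⁅h (b * c), v⁆ = p • v) (n : ℕ) :
    ⁅h (b * c), (LieModule.toEnd ℂ L V (f c) ^ n) v⁆ - p • (LieModule.toEnd ℂ L V (f c) ^ n) v ∈
      loweringFiltrationMul f v (c * c) n := by
  induction n with
  | zero => simp [hp]
  | succ n ih =>
    have key := add_mem (Submodule.smul_mem _ κ
      (lie_lowering_mul_mem f v (c * c) b (lowering_pow_mem f v c n)))
      (lie_lowering_mem_mul f v (c * c) c ih)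
    convert key using 1
    rw [toEnd_pow_succ_apply, leibniz_lie, hhf, smul_lie, lie_sub, lie_smul,
      show b * c * c = c * c * b by ring, add_sub_assoc]

lemma raising_lowering_pow_sub_mem (hef : ∀ a b, ⁅e a, f b⁆ = h (a * b))
    (hhf : ∀ a b, ⁅h a, f b⁆ = κ • f (a * b)) (hev : ∀ a, ⁅e a, v⁆ = 0) {b c : A} {p : ℂ}
    (hp : ⁅h (b * c), v⁆ = p • v) (n : ℕ) :
    ⁅e b, (LieModule.toEnd ℂ L V (f c) ^ (n + 1)) v⁆
        - ((n + 1 : ℂ) * p) • (LieModule.toEnd ℂ L V (f c) ^ n) v ∈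
      loweringFiltrationMul f v (c * c) n := by
  induction n with
  | zero => simp [hp, hef, hev, leibniz_lie (e b) (f c) v]
  | succ n ih =>
    have key := add_mem (cartan_lowering_pow_sub_mem (c := c) hhf hp (n + 1))
      (lie_lowering_mem_mul f v (c * c) c ih)
    convert key using 1
    rw [toEnd_pow_succ_apply _ (n + 1), leibniz_lie, hef, lie_sub, lie_smul,
      ← toEnd_pow_succ_apply]
    push_cast
    module

/-- If `f c` acts nilpotently on the highest weight vector `v` of a current algebra of rank one
and `h` vanishes on the ideal generated by `c ^ 2`, then `h` vanishes on the one generated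
by `c`. -/
lemma cartan_lie_eq_zero_of_mul_self (hef : ∀ a b, ⁅e a, f b⁆ = h (a * b))
    (hhf : ∀ a b, ⁅h a, f b⁆ = κ • f (a * b)) (hev : ∀ a, ⁅e a, v⁆ = 0)
    (hhv : ∀ a, ∃ c : ℂ, ⁅h a, v⁆ = c • v)
    (hnil : ∀ a, ∃ N : ℕ, (LieModule.toEnd ℂ L V (f a) ^ N) v = 0)
    {c : A} (hc : ∀ b, ⁅h (c * c * b), v⁆ = 0) (b : A) : ⁅h (c * b), v⁆ = 0 := by
  obtain ⟨p, hp⟩ := hhv (b * c)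
  rw [mul_comm, hp]
  by_cases hp0 : p = 0
  · rw [hp0, zero_smul]
  obtain ⟨N, hN⟩ := hnil c
  have key : ∀ n, (LieModule.toEnd ℂ L V (f c) ^ n) v ∈ loweringFiltrationMul f v (c * c) n →
      v = 0 := by
    intro n
    induction n with
    | zero => exact fun hw ↦ hw
    | succ n ih =>
      intro hw
      apply ih
      have h1 := sub_mem (raising_lowering_mem_mul hef hhf hev hhv hc b n _ hw)
        (raising_lowering_pow_sub_mem (c := c) hef hhf hev hp n)
      rw [sub_sub_cancel] at h1
      exact (Submodule.smul_mem_iff _ (mul_ne_zero (by exact_mod_cast n.succ_ne_zero) hp0)).1 h1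
  rw [key N (hN ▸ zero_mem _), smul_zero]

lemma cartan_lie_eq_zero_of_pow (hef : ∀ a b, ⁅e a, f b⁆ = h (a * b))
    (hhf : ∀ a b, ⁅h a, f b⁆ = κ • f (a * b)) (hev : ∀ a, ⁅e a, v⁆ = 0)
    (hhv : ∀ a, ∃ c : ℂ, ⁅h a, v⁆ = c • v)
    (hnil : ∀ a, ∃ N : ℕ, (LieModule.toEnd ℂ L V (f a) ^ N) v = 0)
    {c : A} {n : ℕ} (hc : ∀ b, ⁅h (c ^ n * b), v⁆ = 0) : ⁅h c, v⁆ = 0 := by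
  have key : ∀ k : ℕ, (∀ b, ⁅h (c ^ 2 ^ k * b), v⁆ = 0) → ∀ b, ⁅h (c * b), v⁆ = 0 := by
    intro k
    induction k with
    | zero => simp
    | succ k ih =>
      refine fun hk ↦ ih (cartan_lie_eq_zero_of_mul_self hef hhf hev hhv hnil fun b ↦ ?_)
      rw [← pow_add, ← two_mul, ← pow_succ']
      exact hk b
  have h1 := key n (fun b ↦ ?_) 1
  · rwa [mul_one] at h1
  · obtain ⟨d, hd⟩ := Nat.exists_eq_add_of_le (Nat.lt_two_pow_self (n := n)).le
    rw [hd, pow_add, mul_assoc]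
    exact hc _

end CurrentSl2

namespace LoopAffVir

section

variable {g A L : Type*} [LieRing g] [LieAlgebra ℂ g] [CommRing A] [Algebra ℂ A]
  [LieRing L] [LieAlgebra ℂ L] (S : LoopAffVir g A L)
  {V : Type*} [AddCommGroup V] [Module ℂ V] [LieRingModule L V] [LieModule ℂ L V]

lemma cartanSet_subset_cartanASet : S.cartanSet ⊆ S.cartanASet := by
  rintro z (⟨h, hh, rfl⟩ | rfl | rfl | rfl)
  · exact Or.inl (Or.inl (Or.inl ⟨h, hh, 1, rfl⟩))
  · exact Or.inl (Or.inl (Or.inr ⟨1, rfl⟩))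
  · exact Or.inl (Or.inr ⟨1, rfl⟩)
  · exact Or.inr ⟨1, rfl⟩

variable {S} in
/-- A subspace on which the Cartan subalgebra acts by scalars lies in a weight space, hence is
finite dimensional. -/
lemma finiteDimensional_of_cartan_scalar (hV : S.HasFinDimWeightSpaces V) {W : Submodule ℂ V}
    (hW : ∀ z ∈ S.cartanSet, ∃ c : ℂ, ∀ w ∈ W, ⁅z, w⁆ = c • w) : FiniteDimensional ℂ W := by
  rcases eq_or_ne W ⊥ with rfl | hne
  · infer_instance
  obtain ⟨w₀, hw₀, hw₀0⟩ := Submodule.exists_mem_ne_zero_of_ne_bot hne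
  have hW' : ∀ z ∈ S.cartan, ∃ c : ℂ, ∀ w ∈ W, ⁅z, w⁆ = c • w := by
    intro z hz
    induction hz using Submodule.span_induction with
    | mem z hz => exact hW z hz
    | zero => exact ⟨0, by simp⟩
    | add y z _ _ hy hz =>
      obtain ⟨c, hc⟩ := hy
      obtain ⟨d, hd⟩ := hz
      exact ⟨c + d, fun w hw ↦ by rw [add_lie, hc w hw, hd w hw, add_smul]⟩
    | smul t z _ hz =>
      obtain ⟨c, hc⟩ := hz
      exact ⟨t * c, fun w hw ↦ by rw [smul_lie, hc w hw, mul_smul]⟩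
  obtain ⟨φ, hφ⟩ := Module.Projective.exists_dual_eq_one ℂ hw₀0
  let χ : Module.Dual ℂ S.cartan :=
    φ ∘ₗ (LieModule.toEnd ℂ L V : L →ₗ[ℂ] Module.End ℂ V).flip w₀ ∘ₗ S.cartan.subtype
  have hle : W ≤ S.wtSpace V χ := by
    intro w hw z
    obtain ⟨c, hc⟩ := hW' z z.2
    have hχ : χ z = c := by
      show φ ⁅(z : L), w₀⁆ = c
      rw [hc w₀ hw₀, map_smul, hφ, smul_eq_mul, mul_one]
    rw [hχ, hc w hw]
  have := hV χ
  exact Submodule.finiteDimensional_of_le hle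

variable (V) in
/-- The linear map `a ↦ ⁅f a, v⁆`. -/
def orbitMap (f : A →ₗ[ℂ] L) (v : V) : A →ₗ[ℂ] V :=
  (LieModule.toEnd ℂ L V : L →ₗ[ℂ] Module.End ℂ V).flip v ∘ₗ f

@[simp] lemma orbitMap_apply (f : A →ₗ[ℂ] L) (v : V) (a : A) : orbitMap V f v a = ⁅f a, v⁆ := rfl

variable {S} in
lemma cofg_ker_orbitMap (hV : S.HasFinDimWeightSpaces V) {f : A →ₗ[ℂ] L} {v : V}
    (hf : ∀ z ∈ S.cartanSet, ∃ c : ℂ, ∀ a, ⁅z, f a⁆ = c • f a)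
    (hv : ∀ z ∈ S.cartanASet, ∃ c : ℂ, ⁅z, v⁆ = c • v) :
    (LinearMap.ker (orbitMap V f v)).CoFG := by
  rw [← Submodule.range_fg_iff_ker_cofg, ← Module.Finite.iff_fg]
  refine finiteDimensional_of_cartan_scalar hV fun z hz ↦ ?_
  obtain ⟨c, hc⟩ := hf z hz
  obtain ⟨d, hd⟩ := hv z (S.cartanSet_subset_cartanASet hz)
  refine ⟨c + d, ?_⟩
  rintro _ ⟨a, rfl⟩
  rw [orbitMap_apply, leibniz_lie, hc, hd, lie_smul, smul_lie, add_smul]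

lemma cartanSet_lie_D (n : ℤ) {z : L} (hz : z ∈ S.cartanSet) :
    ∃ c : ℂ, ∀ a, ⁅z, S.D n a⁆ = c • S.D n a := by
  obtain ⟨h, hh, rfl⟩ | rfl | rfl | rfl := hz
  · exact ⟨0, fun a ↦ by rw [← lie_skew, S.lie_DE]; simp⟩
  · exact ⟨0, fun a ↦ by rw [S.K_central, zero_smul]⟩
  · exact ⟨n, fun a ↦ by rw [S.lie_DD]; simp⟩
  · exact ⟨0, fun a ↦ by rw [S.C_central, zero_smul]⟩

lemma cartanSet_lie_E (n : ℤ) {χ : Module.Dual ℂ S.H} {x : g} (hx : x ∈ S.rootSp χ) {z : L}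
    (hz : z ∈ S.cartanSet) : ∃ c : ℂ, ∀ a, ⁅z, S.E n x a⁆ = c • S.E n x a := by
  obtain ⟨h, hh, rfl⟩ | rfl | rfl | rfl := hz
  · exact ⟨χ ⟨h, hh⟩, fun a ↦ by
      rw [S.lie_EE, show ⁅h, x⁆ = χ ⟨h, hh⟩ • x from (S.rootSp_def χ x).1 hx ⟨h, hh⟩]; simp⟩
  · exact ⟨0, fun a ↦ by rw [S.K_central, zero_smul]⟩
  · exact ⟨n, fun a ↦ by rw [S.lie_DE]; simp⟩
  · exact ⟨0, fun a ↦ by rw [S.C_central, zero_smul]⟩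

/-- The annihilator `{a | ⁅f a, v⁆ = 0}` of a highest weight vector `v`, where the `f a` span an
eigenspace for the adjoint action of `d₀ ⊗ A` with nonzero eigenvalue. -/
def annIdeal (f : A →ₗ[ℂ] L) (v : V) {c : ℂ} (hc : c ≠ 0)
    (hf : ∀ a b, ⁅S.D 0 b, f a⁆ = c • f (b * a)) (hv : ∀ b, ∃ d : ℂ, ⁅S.D 0 b, v⁆ = d • v) :
    Ideal A where
  carrier := {a | ⁅f a, v⁆ = 0}
  add_mem' := by
    intro a b ha hb
    show ⁅f (a + b), v⁆ = 0
    rw [map_add, add_lie, show ⁅f a, v⁆ = 0 from ha, show ⁅f b, v⁆ = 0 from hb, add_zero]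
  zero_mem' := by
    show ⁅f 0, v⁆ = 0
    rw [map_zero, zero_lie]
  smul_mem' := by
    intro b a ha
    show ⁅f (b * a), v⁆ = 0
    have ha' : ⁅f a, v⁆ = 0 := ha
    obtain ⟨d, hd⟩ := hv b
    have h1 := leibniz_lie (S.D 0 b) (f a) v
    rw [hf, ha', hd, lie_zero, lie_smul, ha', smul_zero, add_zero, smul_lie] at h1
    exact (smul_eq_zero.1 h1.symm).resolve_left hc

@[simp] lemma mem_annIdeal {f : A →ₗ[ℂ] L} {v : V} {c : ℂ} {hc : c ≠ 0}
    {hf : ∀ a b, ⁅S.D 0 b, f a⁆ = c • f (b * a)} {hv : ∀ b, ∃ d : ℂ, ⁅S.D 0 b, v⁆ = d • v}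
    {a : A} : a ∈ S.annIdeal f v hc hf hv ↔ ⁅f a, v⁆ = 0 := Iff.rfl

lemma lie_mem_cartan_of_mem_rootSp {α : Module.Dual ℂ S.H} {x y : g} (hx : x ∈ S.rootSp α)
    (hy : y ∈ S.rootSp (-α)) : ⁅x, y⁆ ∈ S.H := by
  have := S.isCartan
  rw [← LieSubalgebra.IsCartanSubalgebra.self_normalizing (H := S.H),
    LieSubalgebra.mem_normalizer_iff']
  intro h hh
  have h1 := (S.rootSp_def α x).1 hx ⟨h, hh⟩
  have h2 := (S.rootSp_def (-α) y).1 hy ⟨h, hh⟩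
  rw [leibniz_lie, h1, h2, smul_lie, lie_smul, LinearMap.neg_apply, neg_smul, add_neg_cancel]
  exact S.H.zero_mem

lemma form_eq_zero_of_add_ne_zero {α β : Module.Dual ℂ S.H} {x y : g} (hx : x ∈ S.rootSp α)
    (hy : y ∈ S.rootSp β) (hαβ : β ≠ -α) : S.form x y = 0 := by
  obtain ⟨h, hh⟩ : ∃ h, β h ≠ -α h := by
    contrapose! hαβ
    ext h
    simpa using hαβ h
  have h1 := S.form_invariant x h y
  rw [(S.rootSp_def β y).1 hy h, ← lie_skew, (S.rootSp_def α x).1 hx h] at h1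
  simp only [map_neg, map_smul, LinearMap.neg_apply, LinearMap.smul_apply, smul_eq_mul] at h1
  have h2 : (β h + α h) * S.form x y = 0 := by linear_combination -h1
  refine (mul_eq_zero.1 h2).resolve_left fun h3 ↦ hh ?_
  linear_combination h3

/-- Integrability forces the coroot of a real root to vanish on the radical of an ideal on which
the Cartan part of `g'` vanishes. -/
lemma lie_coroot_eq_zero_of_mem_radical (hInt : S.IsIntegrable V) {α : Module.Dual ℂ S.H}
    (hα : α ≠ 0) {x y : g} (hx : x ∈ S.rootSp α) (hy : y ∈ S.rootSp (-α)) {n : ℤ} {v : V}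
    (hxv : ∀ a, ⁅S.E n x a, v⁆ = 0) (hv : ∀ z ∈ S.cartanASet, ∃ c : ℂ, ⁅z, v⁆ = c • v)
    {I : Ideal A} (hI : ∀ a ∈ I, ⁅S.E 0 ⁅x, y⁆ a, v⁆ = 0 ∧ ⁅S.K a, v⁆ = 0)
    {a : A} (ha : a ∈ I.radical) :
    ⁅S.E 0 ⁅x, y⁆ a + ((n : ℂ) * S.form x y) • S.K a, v⁆ = 0 := by
  obtain ⟨m, hm⟩ := ha
  have hxy := S.lie_mem_cartan_of_mem_rootSp hx hy
  refine cartan_lie_eq_zero_of_pow (A := A) (e := fun a ↦ S.E n x a) (f := fun a ↦ S.E (-n) y a)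
    (h := fun a ↦ S.E 0 ⁅x, y⁆ a + ((n : ℂ) * S.form x y) • S.K a) (κ := -α ⟨_, hxy⟩) (n := m)
    ?_ ?_ hxv ?_ ?_ ?_
  · intro a b
    simp [S.lie_EE]
  · intro a b
    have h1 := (S.rootSp_def (-α) y).1 hy ⟨_, hxy⟩
    simp only at h1
    simp only [add_lie, smul_lie, S.K_central, S.lie_EE, h1]
    simp
  · intro a
    obtain ⟨c, hc⟩ := hv (S.E 0 ⁅x, y⁆ a) (Or.inl (Or.inl (Or.inl ⟨_, hxy, a, rfl⟩)))
    obtain ⟨d, hd⟩ := hv (S.K a) (Or.inl (Or.inl (Or.inr ⟨a, rfl⟩)))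
    exact ⟨c + ((n : ℂ) * S.form x y) * d, by
      rw [add_lie, smul_lie, hc, hd]
      module⟩
  · intro a
    rcases eq_or_ne y 0 with rfl | hy0
    · exact ⟨1, by simp⟩
    · exact hInt.2.2 (-α) (neg_ne_zero.2 hα) (fun h ↦ hy0 (by rwa [h] at hy)) y hy (-n) a v
  · intro b
    obtain ⟨h1, h2⟩ := hI _ (I.mul_mem_right b hm)
    rw [add_lie, smul_lie, h1, h2, smul_zero, add_zero]

end

section Killing

variable {g A L : Type*} [LieRing g] [LieAlgebra ℂ g] [FiniteDimensional ℂ g]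
  [LieAlgebra.IsSimple ℂ g] [CommRing A] [Algebra ℂ A]
  [LieRing L] [LieAlgebra ℂ L] (S : LoopAffVir g A L)

open LieAlgebra LieAlgebra.IsKilling LieModule

lemma mem_rootSp_of_mem_rootSpace [S.H.IsCartanSubalgebra] {α : Weight ℂ S.H g} {x : g}
    (hx : x ∈ rootSpace S.H α) : x ∈ S.rootSp α.toLinear :=
  (S.rootSp_def _ x).2 fun h ↦ lie_eq_smul_of_mem_rootSpace hx h

lemma mem_of_forall_rootSp_le {P : Submodule ℂ g} (hP : ∀ α, S.rootSp α ≤ P) (x : g) : x ∈ P := by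
  have := S.isCartan
  have htop : (⨆ α : Weight ℂ S.H g, (rootSpace S.H α).toSubmodule) = ⊤ := by
    rw [← LieSubmodule.iSup_toSubmodule, iSup_genWeightSpace_eq_top' ℂ S.H g]
    rfl
  have hle : (⨆ α : Weight ℂ S.H g, (rootSpace S.H α).toSubmodule) ≤ P :=
    iSup_le fun α y hy ↦ hP _ (S.mem_rootSp_of_mem_rootSpace hy)
  exact hle (htop ▸ Submodule.mem_top)

lemma exists_form_ne_zero_s3 : ∃ α : Module.Dual ℂ S.H, α ≠ 0 ∧
    ∃ x ∈ S.rootSp α, ∃ y ∈ S.rootSp (-α), S.form x y ≠ 0 := by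
  by_contra! hcon
  have hbot : ∀ α : Module.Dual ℂ S.H, α ≠ 0 → S.rootSp α = ⊥ := by
    intro α hα
    rw [eq_bot_iff]
    refine fun x hx ↦ S.form_nondeg x fun y ↦ ?_
    refine S.mem_of_forall_rootSp_le (P := LinearMap.ker (S.form x)) (fun β y hy ↦ ?_) y
    by_cases hβ : β = -α
    · subst hβ
      exact hcon α hα x hx y hy
    · exact S.form_eq_zero_of_add_ne_zero hx hy hβ
  have h0 : ∀ x : g, x ∈ S.rootSp 0 := S.mem_of_forall_rootSp_le fun α ↦ by
    by_cases hα : α = 0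
    · rw [hα]
    · rw [hbot α hα]
      exact bot_le
  have := S.isCartan
  have hH : ∀ x : g, x ∈ S.H := fun x ↦ by
    rw [← LieSubalgebra.IsCartanSubalgebra.self_normalizing (H := S.H),
      LieSubalgebra.mem_normalizer_iff']
    intro h hh
    have h1 := (S.rootSp_def 0 x).1 (h0 x) ⟨h, hh⟩
    simp only [LinearMap.zero_apply, zero_smul] at h1
    rw [h1]
    exact S.H.zero_mem
  exact IsSimple.non_abelian ℂ (L := g) ⟨fun x y ↦ by
    simpa using (S.rootSp_def 0 y).1 (h0 y) ⟨x, hH x⟩⟩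

/-- `h̊` is spanned by the brackets of opposite root vectors. -/
lemma cartan_induction {P : Submodule ℂ g}
    (hP : ∀ α : Module.Dual ℂ S.H, α ∈ S.Δplus → ∀ x ∈ S.rootSp α, ∀ y ∈ S.rootSp (-α),
      ⁅x, y⁆ ∈ P) {h : g} (hh : h ∈ S.H) : h ∈ P := by
  have := S.isCartan
  have hle : Submodule.span ℂ (Set.range (rootSystem S.H).coroot) ≤
      P.comap S.H.toSubmodule.subtype := by
    rw [Submodule.span_le]
    rintro _ ⟨α, rfl⟩
    have hα : (α : Weight ℂ S.H g).IsNonZero := S.H.isNonZero_coe_root α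
    obtain ⟨h, e, f, ht, he, hf⟩ := exists_isSl2Triple_of_weight_isNonZero hα
    have hc := ht.h_eq_coroot hα he hf
    have he' := S.mem_rootSp_of_mem_rootSpace he
    have hf' : f ∈ S.rootSp (-(α : Weight ℂ S.H g).toLinear) := by
      rw [← Weight.toLinear_neg]
      exact S.mem_rootSp_of_mem_rootSpace hf
    have he0 : S.rootSp (α : Weight ℂ S.H g).toLinear ≠ ⊥ :=
      fun hb ↦ ht.e_ne_zero (by rwa [hb] at he')
    have hα0 : (α : Weight ℂ S.H g).toLinear ≠ 0 := by
      simp [hα]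
    show ((rootSystem S.H).coroot α : g) ∈ P
    rw [rootSystem_coroot_apply, ← hc, ← ht.lie_e_f]
    rcases S.Δplus_cover _ hα0 he0 with h1 | h1
    · exact hP _ h1 e he' f hf'
    · rw [← lie_skew]
      exact P.neg_mem (hP _ h1 f hf' e (by rwa [neg_neg]))
  rw [RootPairing.IsRootSystem.span_coroot_eq_top] at hle
  exact hle (x := ⟨h, hh⟩) Submodule.mem_top

variable {V : Type*} [AddCommGroup V] [Module ℂ V] [LieRingModule L V] [LieModule ℂ L V]

/-- The elements `a` of `A` such that `g̊ ⊗ t⁻¹ ⊗ a`, `d₋₁ ⊗ a` and `d₋₂ ⊗ a` annihilate a highest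
weight vector form a cofinite ideal. -/
lemma exists_cofinite_ideal (hV : S.HasFinDimWeightSpaces V) {v : V}
    (hv : ∀ z ∈ S.cartanASet, ∃ c : ℂ, ⁅z, v⁆ = c • v) :
    ∃ I : Ideal A, IsCofiniteIdeal I ∧ ∀ a ∈ I, (∀ x, ⁅S.E (-1) x a, v⁆ = 0) ∧
      ⁅S.D (-1) a, v⁆ = 0 ∧ ⁅S.D (-2) a, v⁆ = 0 := by
  have hv0 : ∀ b, ∃ d : ℂ, ⁅S.D 0 b, v⁆ = d • v := fun b ↦ hv _ (Or.inl (Or.inr ⟨b, rfl⟩))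
  let IE (x : g) : Ideal A := S.annIdeal (S.E (-1) x) v (c := -1) (by norm_num)
    (fun a b ↦ by rw [S.lie_DE]; simp) hv0
  let ID1 : Ideal A := S.annIdeal (S.D (-1)) v (c := -1) (by norm_num)
    (fun a b ↦ by rw [S.lie_DD]; simp) hv0
  let ID2 : Ideal A := S.annIdeal (S.D (-2)) v (c := -2) (by norm_num)
    (fun a b ↦ by rw [S.lie_DD]; simp) hv0
  have hE : ∀ x, (LinearMap.ker (orbitMap V (S.E (-1) x) v)).CoFG := by
    let P : Submodule ℂ g :=
      { carrier := {x | (LinearMap.ker (orbitMap V (S.E (-1) x) v)).CoFG}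
        zero_mem' := by
          refine Submodule.CoFG.of_le (S := ⊤) (fun a _ ↦ ?_) Submodule.CoFG.top
          simp
        add_mem' := by
          intro x y hx hy
          refine Submodule.CoFG.of_le (fun a ha ↦ ?_) (Submodule.CoFG.inf hx hy)
          obtain ⟨h1, h2⟩ := ha
          simp only [SetLike.mem_coe, LinearMap.mem_ker, orbitMap_apply] at h1 h2 ⊢
          rw [map_add, LinearMap.add_apply, add_lie, h1, h2, add_zero]
        smul_mem' := by
          intro c x hx
          refine Submodule.CoFG.of_le (fun a ha ↦ ?_) hx
          simp only [LinearMap.mem_ker, orbitMap_apply] at ha ⊢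
          rw [map_smul, LinearMap.smul_apply, smul_lie, ha, smul_zero] }
    exact S.mem_of_forall_rootSp_le (P := P) fun α x hx ↦
      cofg_ker_orbitMap hV (fun z hz ↦ S.cartanSet_lie_E (-1) hx hz) hv
  have hD : ∀ n, (LinearMap.ker (orbitMap V (S.D n) v)).CoFG := fun n ↦
    cofg_ker_orbitMap hV (fun z hz ↦ S.cartanSet_lie_D n hz) hv
  refine ⟨(⨅ x, IE x) ⊓ ID1 ⊓ ID2, ?_, ?_⟩
  · let B := Module.finBasis ℂ g
    have hB := Submodule.CoFG.sInf_of_finite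
      (Set.finite_range fun i ↦ LinearMap.ker (orbitMap V (S.E (-1) (B i)) v))
      (by rintro _ ⟨i, rfl⟩; exact hE _)
    have hle : sInf (Set.range fun i ↦ LinearMap.ker (orbitMap V (S.E (-1) (B i)) v)) ⊓
        LinearMap.ker (orbitMap V (S.D (-1)) v) ⊓ LinearMap.ker (orbitMap V (S.D (-2)) v) ≤
        ((⨅ x, IE x) ⊓ ID1 ⊓ ID2).restrictScalars ℂ := by
      rintro a ⟨⟨ha, ha1⟩, ha2⟩
      refine ⟨⟨?_, ha1⟩, ha2⟩
      simp only [SetLike.mem_coe, Submodule.mem_iInf]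
      intro x
      have hx : x ∈ Submodule.span ℂ (Set.range B) := by
        rw [B.span_eq]
        exact Submodule.mem_top
      show ⁅S.E (-1) x a, v⁆ = 0
      induction hx using Submodule.span_induction with
      | mem x hx =>
        obtain ⟨i, rfl⟩ := hx
        simp only [sInf_range, SetLike.mem_coe, Submodule.mem_iInf] at ha
        exact ha i
      | zero => simp
      | add x y _ _ hx hy => rw [map_add, LinearMap.add_apply, add_lie, hx, hy, add_zero]
      | smul c x _ hx => rw [map_smul, LinearMap.smul_apply, smul_lie, hx, smul_zero]
    have hcofg := Submodule.CoFG.of_le hle ((hB.inf (hD (-1))).inf (hD (-2)))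
    exact Module.Finite.equiv (Submodule.Quotient.restrictScalarsEquiv ℂ _)
  · rintro a ⟨⟨ha, ha1⟩, ha2⟩
    simp only [SetLike.mem_coe, Submodule.mem_iInf] at ha
    exact ⟨ha, ha1, ha2⟩

/-- The currents with coefficient `a` in the Cartan part annihilate a highest weight vector as
soon as the lowering operators of degrees `-1` and `-2` with coefficient `a` do. -/
lemma cartan_lie_eq_zero_of_lowering {v : V} (hplus : ∀ z ∈ S.plusSet, ⁅z, v⁆ = 0) {a : A}
    (hE : ∀ x, ⁅S.E (-1) x a, v⁆ = 0) (hD1 : ⁅S.D (-1) a, v⁆ = 0) (hD2 : ⁅S.D (-2) a, v⁆ = 0) :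
    ⁅S.D 0 a, v⁆ = 0 ∧ ⁅S.C a, v⁆ = 0 ∧ ⁅S.K a, v⁆ = 0 ∧ ∀ x y : g, ⁅S.E 0 ⁅x, y⁆ a, v⁆ = 0 := by
  have hDpos : ∀ n : ℤ, 0 < n → ⁅S.D n 1, v⁆ = 0 := fun n hn ↦
    hplus _ (Or.inr ⟨n, hn, 1, rfl⟩)
  have hEpos : ∀ x, ⁅S.E 1 x 1, v⁆ = 0 := fun x ↦
    hplus _ (Or.inl (Or.inl ⟨1, one_pos, x, 1, rfl⟩))
  have hD0 : ⁅S.D 0 a, v⁆ = 0 := by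
    have h1 : ⁅⁅S.D 1 1, S.D (-1) a⁆, v⁆ = 0 := by
      rw [lie_lie, hD1, hDpos 1 one_pos, lie_zero, lie_zero, sub_zero]
    rw [S.lie_DD] at h1
    norm_num at h1
    exact h1
  have hC : ⁅S.C a, v⁆ = 0 := by
    have h1 : ⁅⁅S.D 2 1, S.D (-2) a⁆, v⁆ = 0 := by
      rw [lie_lie, hD2, hDpos 2 two_pos, lie_zero, lie_zero, sub_zero]
    rw [S.lie_DD] at h1
    norm_num [hD0] at h1
    exact h1
  have hxy : ∀ x y : g, ⁅S.E 0 ⁅x, y⁆ a, v⁆ + S.form x y • ⁅S.K a, v⁆ = 0 := by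
    intro x y
    have h1 : ⁅⁅S.E 1 x 1, S.E (-1) y a⁆, v⁆ = 0 := by
      rw [lie_lie, hE, hEpos, lie_zero, lie_zero, sub_zero]
    rw [S.lie_EE] at h1
    simpa using h1
  have hK : ⁅S.K a, v⁆ = 0 := by
    obtain ⟨α, -, x, -, y, -, hform⟩ := S.exists_form_ne_zero_s3
    have h1 := hxy x y
    have h2 := hxy y x
    rw [← lie_skew, S.form_symm y x, map_neg, LinearMap.neg_apply, neg_lie] at h2
    have h3 : (2 * S.form x y) • ⁅S.K a, v⁆ = 0 := by
      have h3 := congrArg₂ (· + ·) h1 h2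
      simp only [add_zero] at h3
      rw [← h3]
      module
    exact (smul_eq_zero.1 h3).resolve_left (mul_ne_zero two_ne_zero hform)
  refine ⟨hD0, hC, hK, fun x y ↦ ?_⟩
  simpa [hK] using hxy x y

end Killing

end LoopAffVir

/-- If the irreducible highest weight module `V(ψ)` is integrable, then there
is a cofinite ideal `I` of `A` with `ψ(d₀ ⊗ I) = 0`, `ψ(C ⊗ I) = 0` and
`ψ((h̊ ⊕ ℂK) ⊗ √I) = 0`. -/
theorem statement3
    {g A L : Type*} [LieRing g] [LieAlgebra ℂ g] [FiniteDimensional ℂ g]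
    [LieAlgebra.IsSimple ℂ g]
    [CommRing A] [Algebra ℂ A] [Algebra.FiniteType ℂ A]
    [LieRing L] [LieAlgebra ℂ L]
    (S : LoopAffVir g A L)
    (V : Type*) [AddCommGroup V] [Module ℂ V] [LieRingModule L V] [LieModule ℂ L V]
    (ψ : Module.Dual ℂ S.cartanA)
    (hHW : S.IsHWModule V ψ)
    (hIrr : IsSimpleOrder (LieSubmodule ℂ L V))
    (hInt : S.IsIntegrable V)
    :
    ∃ I : Ideal A, IsCofiniteIdeal I ∧
      (∀ a ∈ I, ψ (S.DA0 a) = 0 ∧ ψ (S.CA a) = 0) ∧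
      (∀ a ∈ I.radical, ∀ h : S.H, ψ (S.eHA h a) = 0 ∧ ψ (S.KA a) = 0) := by
  obtain ⟨v, hv0, hplus, hψ, -⟩ := hHW
  have hv : ∀ z ∈ S.cartanASet, ∃ c : ℂ, ⁅z, v⁆ = c • v := fun z hz ↦
    ⟨ψ ⟨z, Submodule.subset_span hz⟩, hψ ⟨z, Submodule.subset_span hz⟩⟩
  have hψ0 : ∀ z : S.cartanA, ⁅(z : L), v⁆ = 0 → ψ z = 0 := fun z hz ↦
    (smul_eq_zero.1 ((hψ z).symm.trans hz)).resolve_right hv0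
  obtain ⟨I, hcof, hI⟩ := S.exists_cofinite_ideal hInt.2.1 hv
  have hI' : ∀ a ∈ I, _ := fun a ha ↦
    S.cartan_lie_eq_zero_of_lowering hplus (hI a ha).1 (hI a ha).2.1 (hI a ha).2.2
  refine ⟨I, hcof, fun a ha ↦ ⟨hψ0 _ (hI' a ha).1, hψ0 _ (hI' a ha).2.1⟩, fun a ha h ↦ ?_⟩
  have hH : ∀ x ∈ S.H, ⁅S.E 0 x a, v⁆ = 0 := fun x hx ↦ by
    refine S.cartan_induction (P := LinearMap.ker
      ((LieModule.toEnd ℂ L V : L →ₗ[ℂ] Module.End ℂ V).flip v ∘ₗ (S.E 0).flip a))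
      (fun α hα x hx y hy ↦ ?_) hx
    have key := S.lie_coroot_eq_zero_of_mem_radical hInt (S.Δplus_root α hα).1 hx hy (n := 0)
      (fun b ↦ hplus _ (Or.inl (Or.inr ⟨α, hα, x, hx, b, rfl⟩))) hv
      (fun b hb ↦ ⟨(hI' b hb).2.2.2 x y, (hI' b hb).2.2.1⟩) ha
    simpa using key
  refine ⟨hψ0 _ (hH h h.2), hψ0 _ ?_⟩
  obtain ⟨α, hα, x, hx, y, hy, hform⟩ := S.exists_form_ne_zero_s3
  have key := S.lie_coroot_eq_zero_of_mem_radical hInt hα hx hy (n := 1)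
    (fun b ↦ hplus _ (Or.inl (Or.inl ⟨1, one_pos, x, b, rfl⟩))) hv
    (fun b hb ↦ ⟨(hI' b hb).2.2.2 x y, (hI' b hb).2.2.1⟩) ha
  rw [add_lie, hH _ (S.lie_mem_cartan_of_mem_rootSp hx hy), zero_add, smul_lie] at key
  exact (smul_eq_zero.1 key).resolve_left (by simpa using hform)
end
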